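/- Let X ∈ ℝ^{d×n} be deterministic and (ε,B)-orthonormal with ε < 1/λ_σ, let W ∈ ℝ^{ď×d} have i.i.d. N(0,1) entries, and set X̌ = σ(WX)/√ď, where σ is twice differentiable with |σ'|,|σ''| ≤ λ_σ, E[σ(ξ)]=0, and E[σ(ξ)²]=1 for ξ ~ N(0,1). Then there exist universal constants C, c > 0 such that, with probability at least 1 − 2n²e^{−c ď ε²} − 3e^{−cn}, the matrix X̌ is (ε̌, B̌)-orthonormal, where ε̌ = Cλ_σ²ε and B̌ = C(1 + n/ď)λ_σ²B. -/

import Mathlib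

/-!
Lemma (propagation of `(ε,B)`-orthonormality through one layer): if `X` is
`(ε,B)`-orthonormal with `ε < 1/λ_σ` and `W` is an i.i.d. standard Gaussian matrix, then
with probability at least `1 − 2n²e^{−cďε²} − 3e^{−cn}` the matrix `X̌ = σ(WX)/√ď` is
`(Cλ_σ²ε, C(1 + n/ď)λ_σ²B)`-orthonormal.
-/

open MeasureTheory ProbabilityTheory Filter Topology Matrix

noncomputable abbrev stdGaussian : Measure ℝ := gaussianReal 0 1

noncomputable abbrev gaussianVec (d : ℕ) : Measure (Fin d → ℝ) :=
  Measure.pi fun _ => stdGaussian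

noncomputable abbrev gaussianMat (a b : ℕ) : Measure (Fin a → Fin b → ℝ) :=
  Measure.pi fun _ => gaussianVec b

/-- ℓ₂→ℓ₂ operator norm of a real matrix. -/
noncomputable def opNorm {m n : ℕ} (X : Matrix (Fin m) (Fin n) ℝ) : ℝ :=
  ‖LinearMap.toContinuousLinearMap (Matrix.toEuclideanLin X)‖

/-- `(ε,B)`-orthonormality of the columns of a matrix. -/
def IsOrthonormal {d n : ℕ} (ε B : ℝ) (X : Matrix (Fin d) (Fin n) ℝ) : Prop :=
  (∀ α : Fin n, |(∑ i, X i α ^ 2) - 1| ≤ ε) ∧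
  (∀ α β : Fin n, α ≠ β → |∑ i, X i α * X i β| ≤ ε) ∧
  opNorm X ≤ B ∧
  ∑ α : Fin n, ((∑ i, X i α ^ 2) - 1) ^ 2 ≤ B ^ 2

/-
The rows of `W` are i.i.d. standard Gaussian vectors `w`, so everything about `X̌` is controlled by
exponential moments of functions of a single `w`.

* A Gram entry of `X̌` is the average of `ď` independent copies of the subexponential variable
  `σ(w·x_α) σ(w·x_β)`. Its mean is within `O(λ²ε)` of `δ_αβ`: scaling `x_α` to unit length costs
  `O(λ²ε)`, and for `α ≠ β` the variables `w·x_α` and `w·x_β` are independent up to a component of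
  `x_β` along `x_α` of size `O(ε)`. Bernstein's inequality and a union bound over the `n²` entries
  give the first term of the failure probability.
* For a unit vector `v` consider `∑ α, v α * σ(w·x_α)` and `∑ α, v α * (σ(w·x_α)² - E σ(w·x_α)²)`.
  Their gradients are `X` applied to vectors of length at most `λ` and `2λ √(∑ v_α² σ(w·x_α)²)`,
  so Pisier's Gaussian concentration inequality makes the first subgaussian and the second
  subexponential. A `1/2`-net of at most `5ⁿ` points of the unit ball upgrades the resulting tail
  bounds to the operator norm of `X̌` and to the Euclidean norm of its centred squared column norms,
  off events of probability `e^{-n}`.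
-/

section ExponentialMoments

open scoped ENNReal

variable {Ω : Type*} [MeasurableSpace Ω] {μ : Measure Ω} {f g : Ω → ℝ}

/-- The exponential moment `E[exp f]`, valued in `[0, ∞]` so that bounding it presupposes no
integrability. -/
noncomputable def expMoment (f : Ω → ℝ) (μ : Measure Ω) : ℝ≥0∞ :=
  ∫⁻ ω, ENNReal.ofReal (Real.exp (f ω)) ∂μ

lemma expMoment_mono (h : ∀ ω, f ω ≤ g ω) : expMoment f μ ≤ expMoment g μ :=
  lintegral_mono fun ω => ENNReal.ofReal_le_ofReal (Real.exp_le_exp.2 (h ω))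

lemma expMoment_const_add (a : ℝ) (f : Ω → ℝ) (μ : Measure Ω) :
    expMoment (fun ω => a + f ω) μ = ENNReal.ofReal (Real.exp a) * expMoment f μ := by
  simp only [expMoment, Real.exp_add, ENNReal.ofReal_mul (Real.exp_pos a).le]
  exact lintegral_const_mul' _ _ ENNReal.ofReal_ne_top

lemma expMoment_comp {Ω' : Type*} [MeasurableSpace Ω'] {ν : Measure Ω'} {T : Ω → Ω'}
    (hT : MeasurePreserving T μ ν) {f : Ω' → ℝ} (hf : Measurable f) :
    expMoment (fun ω => f (T ω)) μ = expMoment f ν :=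
  hT.lintegral_comp (f := fun ω => ENNReal.ofReal (Real.exp (f ω))) (by fun_prop)

lemma integrable_exp_of_expMoment_ne_top (hf : AEStronglyMeasurable f μ)
    (h : expMoment f μ ≠ ∞) : Integrable (fun ω => Real.exp (f ω)) μ :=
  (lintegral_ofReal_ne_top_iff_integrable (by fun_prop)
    (ae_of_all _ fun _ => (Real.exp_pos _).le)).1 h

lemma expMoment_eq_ofReal_integral (h : Integrable (fun ω => Real.exp (f ω)) μ) :
    expMoment f μ = ENNReal.ofReal (∫ ω, Real.exp (f ω) ∂μ) :=
  (ofReal_integral_eq_lintegral_ofReal h (ae_of_all _ fun _ => (Real.exp_pos _).le)).symm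

lemma ofReal_exp_integral_le_expMoment [IsProbabilityMeasure μ] (hf : Integrable f μ) :
    ENNReal.ofReal (Real.exp (∫ ω, f ω ∂μ)) ≤ expMoment f μ := by
  by_cases h : expMoment f μ = ∞
  · exact h ▸ le_top
  have hexp := integrable_exp_of_expMoment_ne_top hf.aestronglyMeasurable h
  rw [expMoment_eq_ofReal_integral hexp]
  exact ENNReal.ofReal_le_ofReal (convexOn_exp.map_integral_le Real.continuous_exp.continuousOn
    isClosed_univ (ae_of_all _ fun _ => Set.mem_univ _) hf hexp)

lemma expMoment_sum_mul_le [IsProbabilityMeasure μ] {ι : Type*} {s : Finset ι} {f : ι → Ω → ℝ}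
    (hf : ∀ i ∈ s, Measurable (f i)) {p M : ι → ℝ} (hp : ∀ i ∈ s, 0 ≤ p i)
    (hsum : ∑ i ∈ s, p i ≤ 1)
    (hM : ∀ i ∈ s, expMoment (f i) μ ≤ ENNReal.ofReal (Real.exp (M i))) :
    expMoment (fun ω => ∑ i ∈ s, p i * f i ω) μ ≤
      ENNReal.ofReal (Real.exp (∑ i ∈ s, p i * M i)) := by
  have ofReal_exp_sum (a : ι → ℝ) : ENNReal.ofReal (Real.exp (∑ i ∈ s, p i * a i)) =
      ∏ i ∈ s, ENNReal.ofReal (Real.exp (a i)) ^ p i := by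
    rw [Real.exp_sum, ENNReal.ofReal_prod_of_nonneg fun _ _ => (Real.exp_pos _).le]
    refine Finset.prod_congr rfl fun i _ => ?_
    rw [ENNReal.ofReal_rpow_of_pos (Real.exp_pos _), ← Real.exp_mul, mul_comm]
  have holder : ∫⁻ ω, ∏ i ∈ s, ENNReal.ofReal (Real.exp (f i ω)) ^ p i ∂μ ≤
      ∏ i ∈ s, expMoment (f i) μ ^ p i := by
    simpa [expMoment] using ENNReal.lintegral_mul_prod_norm_pow_le (μ := μ) s
      (g := fun _ => 1) (f := fun i ω => ENNReal.ofReal (Real.exp (f i ω))) aemeasurable_const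
      (fun i hi => by have := hf i hi; fun_prop) (1 - ∑ i ∈ s, p i) (p := p) (by ring)
      (by linarith) hp
  rw [ofReal_exp_sum]
  simp only [expMoment, ofReal_exp_sum]
  exact holder.trans (Finset.prod_le_prod' fun i hi => ENNReal.rpow_le_rpow (hM i hi) (hp i hi))

lemma measure_le_of_expMoment_le {M : ℝ} (hf : Measurable f)
    (hM : expMoment f μ ≤ ENNReal.ofReal (Real.exp M)) (u : ℝ) :
    μ {ω | u ≤ f ω} ≤ ENNReal.ofReal (Real.exp (M - u)) := by
  have markov : ENNReal.ofReal (Real.exp u) * μ {ω | u ≤ f ω} ≤ expMoment f μ := by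
    refine (mul_le_mul_right (measure_mono fun ω hω => ?_) _).trans
      (mul_meas_ge_le_lintegral (by fun_prop) _)
    exact ENNReal.ofReal_le_ofReal (Real.exp_le_exp.2 hω)
  rw [Real.exp_sub, ENNReal.ofReal_div_of_pos (Real.exp_pos u),
    ENNReal.le_div_iff_mul_le (by simp [Real.exp_pos]) (by simp), mul_comm]
  exact markov.trans hM

lemma expMoment_pi_sum {ι : Type*} [Fintype ι] [IsProbabilityMeasure μ] (hf : Measurable f) :
    expMoment (fun W : ι → Ω => ∑ i, f (W i)) (Measure.pi fun _ => μ) =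
      expMoment f μ ^ Fintype.card ι := by
  have indep : iIndepFun (fun (i : ι) (W : ι → Ω) => ENNReal.ofReal (Real.exp (f (W i))))
      (Measure.pi fun _ => μ) :=
    iIndepFun_pi (μ := fun _ : ι => μ) (X := fun _ ω => ENNReal.ofReal (Real.exp (f ω)))
      fun _ => by fun_prop
  have marginal (i : ι) : expMoment (fun W : ι → Ω => f (W i)) (Measure.pi fun _ => μ) =
      expMoment f μ :=
    expMoment_comp (measurePreserving_eval (fun _ : ι => μ) i) hf
  calc expMoment (fun W : ι → Ω => ∑ i, f (W i)) (Measure.pi fun _ => μ)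
      = ∫⁻ W : ι → Ω, ∏ i, ENNReal.ofReal (Real.exp (f (W i))) ∂Measure.pi fun _ => μ := by
        simp only [expMoment, Real.exp_sum,
          ENNReal.ofReal_prod_of_nonneg fun _ _ => (Real.exp_pos _).le]
    _ = ∏ i : ι, expMoment (fun W : ι → Ω => f (W i)) (Measure.pi fun _ => μ) :=
        lintegral_prod_eq_prod_lintegral_of_indepFun Finset.univ _ indep fun i => by fun_prop
    _ = expMoment f μ ^ Fintype.card ι := by simp [marginal]

lemma measure_pi_sum_ge_le {ι : Type*} [Fintype ι] [IsProbabilityMeasure μ] {M : ℝ}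
    (hf : Measurable f) (hM : expMoment f μ ≤ ENNReal.ofReal (Real.exp M)) (u : ℝ) :
    (Measure.pi fun _ : ι => μ) {W | u ≤ ∑ i, f (W i)} ≤
      ENNReal.ofReal (Real.exp (Fintype.card ι * M - u)) := by
  refine measure_le_of_expMoment_le (by fun_prop) ?_ u
  rw [expMoment_pi_sum hf, Real.exp_nat_mul, ENNReal.ofReal_pow (Real.exp_pos M).le]
  gcongr

lemma exp_le_one_add_add_sq_mul_exp_abs (x : ℝ) :
    Real.exp x ≤ 1 + x + x ^ 2 * Real.exp |x| := by
  have one_le : 1 ≤ Real.exp |x| := Real.one_le_exp (abs_nonneg x)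
  rcases le_or_gt |x| 1 with h | h
  · have taylor := (abs_le.1 (Real.abs_exp_sub_one_sub_id_le h)).2
    nlinarith [mul_le_mul_of_nonneg_left one_le (sq_nonneg x)]
  rcases lt_abs.1 h with h | h
  · rw [abs_of_pos (by linarith)]
    nlinarith [mul_nonneg (mul_nonneg (sub_nonneg.2 h.le) (by linarith : 0 ≤ x + 1))
      (Real.exp_pos x).le]
  · have exp_le_one : Real.exp x ≤ 1 := Real.exp_le_one_iff.2 (by linarith)
    nlinarith [mul_le_mul_of_nonneg_left one_le (sq_nonneg x)]

lemma exp_mul_le_one_add_add_sq_mul_exp_abs {t : ℝ} (ht : |t| ≤ 1 / 2) (z : ℝ) :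
    Real.exp (t * z) ≤ 1 + t * z + 8 * t ^ 2 * Real.exp |z| := by
  have sq_le : z ^ 2 ≤ 8 * Real.exp (|z| / 2) := by
    have := Real.quadratic_le_exp_of_nonneg (x := |z| / 2) (by positivity)
    nlinarith [sq_abs z, abs_nonneg z]
  have exp_abs_le : Real.exp |t * z| ≤ Real.exp (|z| / 2) := by
    rw [Real.exp_le_exp, abs_mul]
    nlinarith [abs_nonneg z]
  calc Real.exp (t * z) ≤ 1 + t * z + (t * z) ^ 2 * Real.exp |t * z| :=
        exp_le_one_add_add_sq_mul_exp_abs _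
    _ = 1 + t * z + t ^ 2 * (z ^ 2 * Real.exp |t * z|) := by ring
    _ ≤ 1 + t * z + t ^ 2 * (8 * Real.exp (|z| / 2) * Real.exp (|z| / 2)) := by gcongr
    _ = 1 + t * z + 8 * t ^ 2 * Real.exp |z| := by
        rw [mul_assoc, ← Real.exp_add, add_halves]
        ring

section Bernstein

variable {Z : Ω → ℝ}

lemma integrable_of_integrable_exp_abs (hZ : AEStronglyMeasurable Z μ)
    (h : Integrable (fun ω => Real.exp |Z ω|) μ) : Integrable Z μ :=
  h.mono' hZ (ae_of_all _ fun ω => by linarith [Real.add_one_le_exp |Z ω|, Real.norm_eq_abs (Z ω)])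

variable [IsProbabilityMeasure μ]

lemma expMoment_mul_le (hZ : Measurable Z)
    (h : expMoment (fun ω => |Z ω|) μ ≤ ENNReal.ofReal (Real.exp 1)) {t : ℝ} (ht : |t| ≤ 1 / 2) :
    expMoment (fun ω => t * Z ω) μ ≤
      ENNReal.ofReal (Real.exp (t * ∫ ω, Z ω ∂μ + 22 * t ^ 2)) := by
  have hexp : Integrable (fun ω => Real.exp |Z ω|) μ :=
    integrable_exp_of_expMoment_ne_top (by fun_prop) (h.trans_lt ENNReal.ofReal_lt_top).ne
  have hint : Integrable Z μ := integrable_of_integrable_exp_abs (by fun_prop) hexp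
  have hlin : Integrable (fun ω => 1 + t * Z ω) μ := (integrable_const 1).add (hint.const_mul t)
  have integral_exp_le : ∫ ω, Real.exp |Z ω| ∂μ ≤ 2.75 := by
    rw [expMoment_eq_ofReal_integral hexp, ENNReal.ofReal_le_ofReal_iff (Real.exp_pos 1).le] at h
    exact h.trans (by norm_num1; linarith [Real.exp_one_lt_d9])
  have pointwise (ω : Ω) := exp_mul_le_one_add_add_sq_mul_exp_abs ht (Z ω)
  refine (lintegral_mono fun ω => ENNReal.ofReal_le_ofReal (pointwise ω)).trans ?_
  rw [← ofReal_integral_eq_lintegral_ofReal (hlin.fun_add (hexp.const_mul _))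
    (ae_of_all _ fun ω => (Real.exp_pos _).le.trans (pointwise ω)),
    integral_add hlin (hexp.const_mul _), integral_const_mul,
    integral_add (integrable_const 1) (hint.const_mul t), integral_const_mul, integral_const,
    probReal_univ, one_smul]
  refine ENNReal.ofReal_le_ofReal ?_
  nlinarith [Real.add_one_le_exp (t * ∫ ω, Z ω ∂μ + 22 * t ^ 2), sq_nonneg t]

lemma expMoment_mul_sub_integral_le (hZ : Measurable Z)
    (h : expMoment (fun ω => |Z ω|) μ ≤ ENNReal.ofReal (Real.exp 1)) {t : ℝ} (ht : |t| ≤ 1 / 2) :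
    expMoment (fun ω => t * (Z ω - ∫ ω', Z ω' ∂μ)) μ ≤
      ENNReal.ofReal (Real.exp (22 * t ^ 2)) := by
  set m := ∫ ω, Z ω ∂μ
  calc expMoment (fun ω => t * (Z ω - m)) μ
      = ENNReal.ofReal (Real.exp (-(t * m))) * expMoment (fun ω => t * Z ω) μ := by
        rw [← expMoment_const_add]
        exact congrArg (expMoment · μ) (funext fun ω => by ring)
    _ ≤ ENNReal.ofReal (Real.exp (-(t * m))) *
          ENNReal.ofReal (Real.exp (t * m + 22 * t ^ 2)) := by
        gcongr
        exact expMoment_mul_le hZ h ht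
    _ = ENNReal.ofReal (Real.exp (22 * t ^ 2)) := by
        rw [← ENNReal.ofReal_mul (Real.exp_pos _).le, ← Real.exp_add]
        ring_nf

lemma measure_pi_abs_sum_sub_integral_ge_le {ι : Type*} [Fintype ι] (hZ : Measurable Z) {K : ℝ}
    (hK : 0 < K) (h : expMoment (fun ω => |Z ω| / K) μ ≤ ENNReal.ofReal (Real.exp 1)) {ε : ℝ}
    (hε₀ : 0 ≤ ε) (hε₁ : ε ≤ 1) :
    (Measure.pi fun _ : ι => μ)
        {W | Fintype.card ι * (13 * K * ε) ≤ |∑ i, (Z (W i) - ∫ ω, Z ω ∂μ)|} ≤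
      ENNReal.ofReal (2 * Real.exp (-(Fintype.card ι * ε ^ 2))) := by
  set N : ℝ := (Fintype.card ι : ℝ)
  set m := ∫ ω, Z ω ∂μ
  have one_sided {t : ℝ} (ht : |t| = ε / 2) :
      (Measure.pi fun _ : ι => μ) {W | N * (13 * ε ^ 2 / 2) ≤ ∑ i, t * (Z (W i) / K - m / K)} ≤
        ENNReal.ofReal (Real.exp (-(N * ε ^ 2))) := by
    have mgf_le := expMoment_mul_sub_integral_le (hZ.div_const K)
      (by simpa [abs_div, abs_of_pos hK] using h) (t := t) (by rw [ht]; linarith)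
    rw [integral_div] at mgf_le
    refine (measure_pi_sum_ge_le (by fun_prop) mgf_le _).trans_eq ?_
    rw [← sq_abs t, ht, show (Fintype.card ι : ℝ) = N from rfl]
    ring_nf
  have subset_union : {W : ι → Ω | N * (13 * K * ε) ≤ |∑ i, (Z (W i) - m)|} ⊆
      {W | N * (13 * ε ^ 2 / 2) ≤ ∑ i, ε / 2 * (Z (W i) / K - m / K)} ∪
        {W | N * (13 * ε ^ 2 / 2) ≤ ∑ i, -(ε / 2) * (Z (W i) / K - m / K)} := by
    intro W hW
    have scaled : N * (13 * ε ^ 2 / 2) ≤ ε / 2 * (|∑ i, (Z (W i) - m)| / K) := by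
      rw [show N * (13 * ε ^ 2 / 2) = ε / 2 * (N * (13 * K * ε) / K) by field_simp]
      gcongr
      exact hW
    simp only [Set.mem_union, Set.mem_ofPred_eq, ← Finset.mul_sum, ← sub_div, ← Finset.sum_div]
    rcases abs_choice (∑ i, (Z (W i) - m)) with hs | hs <;> rw [hs] at scaled
    · exact Or.inl scaled
    · exact Or.inr (scaled.trans_eq (by ring))
  refine (measure_mono subset_union).trans ((measure_union_le _ _).trans ?_)
  rw [two_mul, ENNReal.ofReal_add (Real.exp_pos _).le (Real.exp_pos _).le]
  exact add_le_add (one_sided (abs_of_nonneg (by positivity)))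
    (one_sided (by rw [abs_neg, abs_of_nonneg (by positivity)]))

end Bernstein

end ExponentialMoments

section StandardGaussian

lemma expMoment_mul_gaussianReal (t : ℝ) :
    expMoment (fun z => t * z) (gaussianReal 0 1) = ENNReal.ofReal (Real.exp (t ^ 2 / 2)) := by
  rw [expMoment_eq_ofReal_integral (integrable_exp_mul_gaussianReal t)]
  have := congrFun (mgf_id_gaussianReal (μ := 0) (v := 1)) t
  simp only [mgf, id] at this
  rw [this]
  simp

lemma expMoment_mul_sq_gaussianReal {s : ℝ} (hs : s < 1 / 2) :
    expMoment (fun z => s * z ^ 2) (gaussianReal 0 1) = ENNReal.ofReal (√(1 - 2 * s))⁻¹ := by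
  have density_mul (z : ℝ) :
      (gaussianPDF 0 1 * fun z => ENNReal.ofReal (Real.exp (s * z ^ 2))) z =
        ENNReal.ofReal ((√(2 * Real.pi))⁻¹ * Real.exp (-(1 / 2 - s) * z ^ 2)) := by
    simp only [Pi.mul_apply, gaussianPDF, gaussianPDFReal]
    rw [← ENNReal.ofReal_mul (by positivity), mul_assoc, ← Real.exp_add]
    simp only [NNReal.coe_one, mul_one, sub_zero]
    ring_nf
  rw [expMoment, gaussianReal_of_var_ne_zero _ one_ne_zero,
    lintegral_withDensity_eq_lintegral_mul _ (measurable_gaussianPDF _ _) (by fun_prop),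
    lintegral_congr density_mul, ← ofReal_integral_eq_lintegral_ofReal
      ((integrable_exp_neg_mul_sq (by linarith)).const_mul _)
      (ae_of_all _ fun _ => by positivity),
    integral_const_mul, integral_gaussian, ← Real.sqrt_inv, ← Real.sqrt_mul (by positivity),
    ← Real.sqrt_inv]
  congr 2
  have := Real.pi_pos
  have : 1 / 2 - s ≠ 0 := by linarith
  have : 1 - 2 * s ≠ 0 := by linarith
  field_simp

/- Integrating the hypothesis over a Gaussian `t` of variance `1/(2k)` linearises `Y²`. -/
lemma expMoment_sq_div_le_of_subgaussian {Ω : Type*} [MeasurableSpace Ω] {μ : Measure Ω}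
    [SFinite μ] {Y : Ω → ℝ} (hY : Measurable Y) {k : ℝ} (hk : 0 < k)
    (h : ∀ t, expMoment (fun ω => t * Y ω) μ ≤ ENNReal.ofReal (Real.exp (k * t ^ 2 / 2))) :
    expMoment (fun ω => Y ω ^ 2 / (4 * k)) μ ≤ ENNReal.ofReal √2 := by
  set a : ℝ := √(1 / (2 * k))
  have ha : a ^ 2 = 1 / (2 * k) := Real.sq_sqrt (by positivity)
  have linearize (ω : Ω) : ENNReal.ofReal (Real.exp (Y ω ^ 2 / (4 * k))) =
      expMoment (fun z => a * Y ω * z) (gaussianReal 0 1) := by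
    rw [expMoment_mul_gaussianReal, mul_pow, ha]
    congr 2
    field_simp
    norm_num
  calc expMoment (fun ω => Y ω ^ 2 / (4 * k)) μ
      = ∫⁻ z, expMoment (fun ω => a * z * Y ω) μ ∂gaussianReal 0 1 := by
        rw [expMoment, lintegral_congr linearize]
        simp only [expMoment]
        rw [lintegral_lintegral_swap (by fun_prop)]
        simp only [mul_right_comm]
    _ ≤ expMoment (fun z => 1 / 4 * z ^ 2) (gaussianReal 0 1) := by
        refine lintegral_mono fun z => (h (a * z)).trans_eq ?_
        rw [mul_pow, ha]
        congr 2
        field_simp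
        ring
    _ = ENNReal.ofReal √2 := by
        rw [expMoment_mul_sq_gaussianReal (by norm_num), ← Real.sqrt_inv]
        norm_num

end StandardGaussian

section GaussianConcentration

/- `deriv G` need not be integrable from below, so the fundamental theorem of calculus is applied
to the truncation `max (deriv G) (log δ)`, which costs at most `δ`. -/
lemma ofReal_exp_sub_le_expMoment_deriv {G : ℝ → ℝ} (hG : Differentiable ℝ G) :
    ENNReal.ofReal (Real.exp (G 1 - G 0)) ≤
      expMoment (deriv G) (volume.restrict (Set.Ioc 0 1)) := by
  set ν : Measure ℝ := volume.restrict (Set.Ioc 0 1)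
  have : IsProbabilityMeasure ν := ⟨by simp [ν]⟩
  refine ENNReal.le_of_forall_pos_le_add fun δ hδ hfin => ?_
  set φ : ℝ → ℝ := fun s => max (deriv G s) (Real.log δ)
  have : Measurable φ := (measurable_deriv G).max measurable_const
  have expMoment_le : expMoment φ ν ≤ expMoment (deriv G) ν + δ := by
    have pointwise (s : ℝ) : ENNReal.ofReal (Real.exp (φ s)) ≤
        ENNReal.ofReal (Real.exp (deriv G s)) + δ := by
      rw [← ENNReal.ofReal_coe_nnreal, ← ENNReal.ofReal_add (Real.exp_pos _).le δ.coe_nonneg,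
        Real.exp_monotone.map_max, Real.exp_log (by exact_mod_cast hδ)]
      exact ENNReal.ofReal_le_ofReal (max_le_add_of_nonneg (Real.exp_pos _).le δ.2)
    refine (lintegral_mono pointwise).trans_eq ?_
    rw [lintegral_add_right _ measurable_const, lintegral_const, measure_univ, mul_one, expMoment]
  have integrable_exp : Integrable (fun s => Real.exp (φ s)) ν :=
    integrable_exp_of_expMoment_ne_top (by fun_prop)
      (expMoment_le.trans_lt (ENNReal.add_lt_top.2 ⟨hfin, ENNReal.coe_lt_top⟩)).ne
  have integrable_φ : Integrable φ ν := by
    refine (integrable_exp.add (integrable_const |Real.log δ|)).mono' (by fun_prop)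
      (ae_of_all _ fun s => abs_le.2 ⟨?_, ?_⟩)
    · have lower : Real.log δ ≤ φ s := le_max_right _ _
      simp only [Pi.add_apply]
      linarith [neg_abs_le (Real.log δ), Real.exp_pos (φ s)]
    · simp only [Pi.add_apply]
      linarith [Real.add_one_le_exp (φ s), abs_nonneg (Real.log δ)]
  have sub_le_integral : G 1 - G 0 ≤ ∫ s, φ s ∂ν := by
    rw [← intervalIntegral.integral_of_le zero_le_one]
    exact intervalIntegral.sub_le_integral_of_hasDeriv_right_of_le zero_le_one
      hG.continuous.continuousOn (fun s _ => (hG s).hasDerivAt.hasDerivWithinAt)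
      ((integrableOn_Icc_iff_integrableOn_Ioc (by simp)).2 integrable_φ) fun s _ => le_max_left _ _
  exact (ENNReal.ofReal_le_ofReal (Real.exp_le_exp.2 sub_le_integral)).trans
    ((ofReal_exp_integral_le_expMoment integrable_φ).trans expMoment_le)

variable {E : Type*} [NormedAddCommGroup E] [NormedSpace ℝ E] {g : E → ℝ}

lemma hasDerivAt_comp_rotation (hg : Differentiable ℝ g) (p : E × E) (s : ℝ) :
    HasDerivAt (fun s : ℝ => g (ContinuousLinearMap.rotation (Real.pi / 2 * s) p).1)
      (Real.pi / 2 * fderiv ℝ g (ContinuousLinearMap.rotation (Real.pi / 2 * s) p).1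
        (ContinuousLinearMap.rotation (Real.pi / 2 * s) p).2) s := by
  have hangle : HasDerivAt (fun s : ℝ => Real.pi / 2 * s) (Real.pi / 2) s := by
    simpa using (hasDerivAt_id s).const_mul (Real.pi / 2)
  have hpath : HasDerivAt (fun s : ℝ => (ContinuousLinearMap.rotation (Real.pi / 2 * s) p).1)
      ((Real.pi / 2) • (ContinuousLinearMap.rotation (Real.pi / 2 * s) p).2) s := by
    simp only [ContinuousLinearMap.rotation_apply]
    exact (((Real.hasDerivAt_cos _).smul_const p.1).add
      ((Real.hasDerivAt_sin _).smul_const p.2)).scomp s hangle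
  simpa only [map_smul, smul_eq_mul, Function.comp_def] using
    (hg _).hasFDerivAt.comp_hasDerivAt s hpath

variable [MeasurableSpace E] [BorelSpace E] [SecondCountableTopology E]

lemma measurable_fderiv_apply_prod (g : E → ℝ) :
    Measurable fun p : E × E => fderiv ℝ g p.1 p.2 :=
  (measurable_uncurry_of_continuous_of_measurable (u := fun v w => fderiv ℝ g w v)
    (fun w => (fderiv ℝ g w).continuous) fun v => measurable_fderiv_apply_const ℝ g v).comp
    measurable_swap

variable [CompleteSpace E] {μ : Measure E} [IsGaussian μ]

/- Pisier: `p ↦ g p.2 - g p.1` is the increment of `g` along the quarter circle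
`cos θ • p.1 + sin θ • p.2`, and each position-velocity pair on that arc is distributed as `p`. -/
lemma expMoment_sub_le_expMoment_fderiv (hμ : μ[id] = 0) (hg : Differentiable ℝ g) :
    expMoment (fun p : E × E => g p.2 - g p.1) (μ.prod μ) ≤
      expMoment (fun p : E × E => Real.pi / 2 * fderiv ℝ g p.1 p.2) (μ.prod μ) := by
  set D : E × E → ℝ := fun p => Real.pi / 2 * fderiv ℝ g p.1 p.2
  have hD : Measurable D := (measurable_fderiv_apply_prod g).const_mul _
  set R : ℝ → E × E → E × E := fun s => ContinuousLinearMap.rotation (Real.pi / 2 * s)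
  have hR : Continuous fun q : (E × E) × ℝ => R q.2 q.1 := by
    simp only [R, ContinuousLinearMap.rotation_apply]
    fun_prop
  have hRμ (s : ℝ) : MeasurePreserving (R s) (μ.prod μ) (μ.prod μ) :=
    ⟨(ContinuousLinearMap.rotation (Real.pi / 2 * s)).continuous.measurable,
      IsGaussian.map_rotation_eq_self hμ _⟩
  set ν : Measure ℝ := volume.restrict (Set.Ioc 0 1)
  have along_arc (p : E × E) : ENNReal.ofReal (Real.exp (g p.2 - g p.1)) ≤
      expMoment (fun s => D (R s p)) ν := by
    have hderiv := hasDerivAt_comp_rotation hg p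
    have := ofReal_exp_sub_le_expMoment_deriv fun s => (hderiv s).differentiableAt
    rw [deriv_eq hderiv] at this
    simpa [ContinuousLinearMap.rotation_apply, D, R] using this
  calc expMoment (fun p : E × E => g p.2 - g p.1) (μ.prod μ)
      ≤ ∫⁻ p, expMoment (fun s => D (R s p)) ν ∂μ.prod μ := lintegral_mono along_arc
    _ = ∫⁻ s, expMoment (fun p => D (R s p)) (μ.prod μ) ∂ν :=
        lintegral_lintegral_swap (hD.comp hR.measurable).exp.ennreal_ofReal.aemeasurable
    _ = ∫⁻ _, expMoment D (μ.prod μ) ∂ν :=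
        lintegral_congr fun s => expMoment_comp (hRμ s) hD
    _ = expMoment D (μ.prod μ) := by simp [ν]

lemma expMoment_strongDual (hμ : μ[id] = 0) (L : StrongDual ℝ E) :
    expMoment L μ = ENNReal.ofReal (Real.exp (Var[L; μ] / 2)) := by
  have law : μ.map L = gaussianReal 0 Var[L; μ].toNNReal := by
    rw [IsGaussian.map_eq_gaussianReal, IsGaussian.integral_dual, show ∫ x, x ∂μ = 0 from hμ,
      map_zero]
  have hexp : Integrable (fun x => Real.exp (1 * x)) (μ.map L) :=
    law ▸ integrable_exp_mul_gaussianReal 1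
  have mgf_eq := mgf_gaussianReal law 1
  rw [integrable_map_measure (by fun_prop) (by fun_prop)] at hexp
  rw [expMoment_eq_ofReal_integral (by simpa [Function.comp_def] using hexp)]
  simp only [mgf, one_mul] at mgf_eq
  simp [mgf_eq, variance_nonneg]

lemma expMoment_sub_integral_le_expMoment_variance (hμ : μ[id] = 0) (hg : Differentiable ℝ g)
    (hint : Integrable g μ) :
    expMoment (fun w => g w - ∫ z, g z ∂μ) μ ≤
      expMoment (fun w => Real.pi ^ 2 / 8 * Var[fderiv ℝ g w; μ]) μ := by
  have hgm : Measurable g := hg.continuous.measurable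
  calc expMoment (fun w => g w - ∫ z, g z ∂μ) μ
      ≤ ∫⁻ w, expMoment (fun z => g w - g z) μ ∂μ := by
        refine lintegral_mono fun w => ?_
        have jensen := ofReal_exp_integral_le_expMoment (f := fun z => g w - g z)
          ((integrable_const (g w)).sub hint)
        rw [integral_sub (integrable_const _) hint] at jensen
        simpa using jensen
    _ = expMoment (fun p : E × E => g p.2 - g p.1) (μ.prod μ) :=
        (lintegral_prod_symm (fun p : E × E => ENNReal.ofReal (Real.exp (g p.2 - g p.1)))
          (by fun_prop)).symm
    _ ≤ expMoment (fun p : E × E => Real.pi / 2 * fderiv ℝ g p.1 p.2) (μ.prod μ) :=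
        expMoment_sub_le_expMoment_fderiv hμ hg
    _ = ∫⁻ w, expMoment (((Real.pi / 2) • fderiv ℝ g w : StrongDual ℝ E)) μ ∂μ := by
        have := measurable_fderiv_apply_prod g
        exact lintegral_prod _ (by fun_prop)
    _ = expMoment (fun w => Real.pi ^ 2 / 8 * Var[fderiv ℝ g w; μ]) μ := by
        refine lintegral_congr fun w => ?_
        rw [expMoment_strongDual hμ, FunLike.coe_smul, variance_smul]
        ring_nf

end GaussianConcentration

section GaussianVector

lemma abs_integral_le_of_abs_le_add_mul_sq {Ω : Type*} [MeasurableSpace Ω] {μ : Measure Ω}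
    [IsProbabilityMeasure μ] {f Y : Ω → ℝ} (hY : MemLp Y 2 μ) {a b : ℝ}
    (h : ∀ ω, |f ω| ≤ a + b * Y ω ^ 2) : |∫ ω, f ω ∂μ| ≤ a + b * ∫ ω, Y ω ^ 2 ∂μ := by
  have hint := hY.integrable_sq.const_mul b
  have hsum : Integrable (fun ω => a + b * Y ω ^ 2) μ := (integrable_const a).add hint
  refine (norm_integral_le_of_norm_le (f := f) hsum (ae_of_all _ h)).trans_eq ?_
  rw [integral_add (integrable_const a) hint, integral_const_mul]
  simp

lemma abs_integral_gaussianReal_le {f : ℝ → ℝ} {a b : ℝ} (h : ∀ z, |f z| ≤ a + b * z ^ 2) :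
    |∫ z, f z ∂gaussianReal 0 1| ≤ a + b := by
  have second_moment : ∫ z, z ^ 2 ∂gaussianReal 0 1 = 1 := by
    rw [← variance_of_integral_eq_zero (by fun_prop) integral_id_gaussianReal,
      variance_fun_id_gaussianReal, NNReal.coe_one]
  have := abs_integral_le_of_abs_le_add_mul_sq (μ := gaussianReal 0 1)
    (memLp_id_gaussianReal 2) h
  simpa [second_moment] using this

lemma abs_le_half_add_half_mul_sq (z : ℝ) : |z| ≤ 1 / 2 + 1 / 2 * z ^ 2 := by
  nlinarith [sq_abs z, sq_nonneg (|z| - 1)]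

variable {d : ℕ}

/-- The continuous linear functional `w ↦ w ⬝ᵥ x`. -/
noncomputable def dotProductCLM (x : Fin d → ℝ) : StrongDual ℝ (Fin d → ℝ) :=
  LinearMap.toContinuousLinearMap ((dotProductBilin ℝ ℝ).flip x)

lemma dotProductCLM_apply (x w : Fin d → ℝ) : dotProductCLM x w = w ⬝ᵥ x := rfl

lemma dotProductCLM_mulVec {n : ℕ} (X : Matrix (Fin d) (Fin n) ℝ) (a : Fin n → ℝ) :
    dotProductCLM (X *ᵥ a) = ∑ α, a α • dotProductCLM (X.col α) := by
  ext w
  simp only [dotProductCLM_apply, dotProduct_mulVec, _root_.sum_apply, _root_.smul_apply]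
  simp [dotProduct, vecMul, mul_comm]

lemma dotProduct_self_nonneg (x : Fin d → ℝ) : 0 ≤ x ⬝ᵥ x := by
  simpa using dotProduct_self_star_nonneg x

instance isGaussian_gaussianVec : IsGaussian (gaussianVec d) := by
  have indep : iIndepFun (fun (j : Fin d) (w : Fin d → ℝ) => w j) (gaussianVec d) :=
    iIndepFun_pi (X := fun _ x => x) fun _ => aemeasurable_id
  have law : HasGaussianLaw (fun (w : Fin d → ℝ) (j : Fin d) => w j) (gaussianVec d) := by
    refine iIndepFun.hasGaussianLaw (fun j => ⟨?_⟩) indep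
    rw [(measurePreserving_eval (fun _ : Fin d => gaussianReal 0 1) j).map_eq]
    infer_instance
  simpa using law.isGaussian_map

lemma integral_id_gaussianVec : ∫ w, id w ∂gaussianVec d = 0 := by
  ext j
  rw [eval_integral fun j => IsGaussian.integrable_id.eval j]
  have := integral_comp_eval (μ := fun _ : Fin d => gaussianReal 0 1) (i := j) (f := id)
    (by fun_prop)
  simpa using this

lemma variance_dotProduct_gaussianVec (x : Fin d → ℝ) :
    Var[fun w => w ⬝ᵥ x; gaussianVec d] = x ⬝ᵥ x := by
  have sum_eq : (fun w : Fin d → ℝ => w ⬝ᵥ x) = ∑ j, fun w => w j * x j := by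
    ext w
    simp [dotProduct]
  rw [sum_eq, variance_sum_pi (X := fun j z => z * x j)
    fun j => (memLp_id_gaussianReal 2).mul_const _]
  simp [variance_mul_const, dotProduct, sq]

lemma hasGaussianLaw_dotProduct (x : Fin d → ℝ) :
    HasGaussianLaw (fun w => w ⬝ᵥ x) (gaussianVec d) :=
  IsGaussian.hasGaussianLaw_id.map_fun (dotProductCLM x)

lemma memLp_dotProduct (x : Fin d → ℝ) : MemLp (fun w => w ⬝ᵥ x) 2 (gaussianVec d) :=
  (hasGaussianLaw_dotProduct x).memLp_two

lemma covariance_dotProduct_gaussianVec (x y : Fin d → ℝ) :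
    cov[fun w => w ⬝ᵥ x, fun w => w ⬝ᵥ y; gaussianVec d] = x ⬝ᵥ y := by
  have polarization := variance_fun_add (memLp_dotProduct x) (memLp_dotProduct y)
  simp only [← dotProduct_add, variance_dotProduct_gaussianVec] at polarization
  simp only [add_dotProduct, dotProduct_add, dotProduct_comm y x] at polarization
  linarith

lemma indepFun_dotProduct {x y : Fin d → ℝ} (h : x ⬝ᵥ y = 0) :
    IndepFun (fun w => w ⬝ᵥ x) (fun w => w ⬝ᵥ y) (gaussianVec d) :=
  HasGaussianLaw.indepFun_of_covariance_eq_zero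
    (IsGaussian.hasGaussianLaw_id.map_fun ((dotProductCLM x).prod (dotProductCLM y)))
    (by rw [covariance_dotProduct_gaussianVec, h])

lemma integral_dotProduct_gaussianVec (x : Fin d → ℝ) :
    ∫ w, w ⬝ᵥ x ∂gaussianVec d = 0 := by
  have := IsGaussian.integral_dual (μ := gaussianVec d) (dotProductCLM x)
  rw [show ∫ w, w ∂gaussianVec d = 0 from integral_id_gaussianVec, map_zero] at this
  exact this

lemma identDistrib_dotProduct_gaussianReal (x : Fin d → ℝ) :
    IdentDistrib (fun w => w ⬝ᵥ x) (fun z => √(x ⬝ᵥ x) * z) (gaussianVec d)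
      (gaussianReal 0 1) where
  aemeasurable_fst := (hasGaussianLaw_dotProduct x).aemeasurable
  aemeasurable_snd := by fun_prop
  map_eq := by
    rw [(hasGaussianLaw_dotProduct x).map_eq_gaussianReal, integral_dotProduct_gaussianVec,
      variance_dotProduct_gaussianVec, gaussianReal_map_const_mul]
    congr 1
    · simp
    · ext
      simp [dotProduct_self_nonneg]

lemma integral_dotProduct_sq_gaussianVec (x : Fin d → ℝ) :
    ∫ w, (w ⬝ᵥ x) ^ 2 ∂gaussianVec d = x ⬝ᵥ x := by
  rw [← variance_dotProduct_gaussianVec, variance_of_integral_eq_zero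
    (hasGaussianLaw_dotProduct x).aemeasurable (integral_dotProduct_gaussianVec x)]

lemma fderiv_sum_mul_comp_dotProduct {n : ℕ} (X : Matrix (Fin d) (Fin n) ℝ) {h : ℝ → ℝ}
    (hh : Differentiable ℝ h) (v : Fin n → ℝ) (w : Fin d → ℝ) :
    fderiv ℝ (fun w => ∑ α, v α * h (w ⬝ᵥ X.col α)) w =
      dotProductCLM (X *ᵥ fun α => v α * deriv h (w ⬝ᵥ X.col α)) := by
  rw [dotProductCLM_mulVec]
  refine (HasFDerivAt.fun_sum fun α _ => ?_).fderiv
  rw [mul_smul]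
  exact ((hh _).hasDerivAt.comp_hasFDerivAt w (dotProductCLM (X.col α)).hasFDerivAt).const_mul _

lemma dotProduct_mulVec_self_le {n : ℕ} (X : Matrix (Fin d) (Fin n) ℝ) (a : Fin n → ℝ) :
    (X *ᵥ a) ⬝ᵥ (X *ᵥ a) ≤ opNorm X ^ 2 * ∑ α, a α ^ 2 := by
  have bound := ContinuousLinearMap.le_opNorm
    (LinearMap.toContinuousLinearMap (Matrix.toEuclideanLin X)) (WithLp.toLp 2 a)
  have := pow_le_pow_left₀ (norm_nonneg _) bound 2
  rw [mul_pow, EuclideanSpace.real_norm_sq_eq, EuclideanSpace.real_norm_sq_eq] at this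
  simpa [opNorm, dotProduct, ← sq] using this

lemma expMoment_sum_mul_comp_sub_integral_le {n : ℕ} (X : Matrix (Fin d) (Fin n) ℝ) {h : ℝ → ℝ}
    (hh : Differentiable ℝ h) (v : Fin n → ℝ)
    (hint : Integrable (fun w => ∑ α, v α * h (w ⬝ᵥ X.col α)) (gaussianVec d)) :
    expMoment (fun w => ∑ α, v α * h (w ⬝ᵥ X.col α) -
        ∫ z, ∑ α, v α * h (z ⬝ᵥ X.col α) ∂gaussianVec d) (gaussianVec d) ≤
      expMoment (fun w => Real.pi ^ 2 / 8 * (opNorm X ^ 2 *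
        ∑ α, (v α * deriv h (w ⬝ᵥ X.col α)) ^ 2)) (gaussianVec d) := by
  have hdiff : Differentiable ℝ fun w : Fin d → ℝ => ∑ α, v α * h (w ⬝ᵥ X.col α) :=
    Differentiable.fun_sum fun α _ => (hh.comp (dotProductCLM (X.col α)).differentiable).const_mul _
  refine (expMoment_sub_integral_le_expMoment_variance integral_id_gaussianVec hdiff hint).trans
    (expMoment_mono fun w => ?_)
  rw [fderiv_sum_mul_comp_dotProduct X hh]
  gcongr
  exact (variance_dotProduct_gaussianVec _).trans_le (dotProduct_mulVec_self_le X _)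

lemma abs_integral_comp_dotProduct_sub_le {F : ℝ → ℝ} (hF : Measurable F) {x : Fin d → ℝ}
    (hFx : Integrable (fun w => F (w ⬝ᵥ x)) (gaussianVec d))
    (hint : Integrable F (gaussianReal 0 1)) {a b : ℝ}
    (h : ∀ z, |F (√(x ⬝ᵥ x) * z) - F z| ≤ a + b * z ^ 2) :
    |∫ w, F (w ⬝ᵥ x) ∂gaussianVec d - ∫ z, F z ∂gaussianReal 0 1| ≤ a + b := by
  have law : IdentDistrib (fun w => F (w ⬝ᵥ x)) (fun z => F (√(x ⬝ᵥ x) * z)) (gaussianVec d)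
      (gaussianReal 0 1) := (identDistrib_dotProduct_gaussianReal x).comp hF
  rw [law.integral_eq, ← integral_sub (law.integrable_snd hFx) hint]
  exact abs_integral_gaussianReal_le h

end GaussianVector

section Activation

/-- The activations of the theorem: differentiable functions with derivative bounded by `l`,
normalized so that `σ(ξ)` has mean zero and variance one for a standard Gaussian `ξ`. -/
structure IsNormalizedActivation (σ : ℝ → ℝ) (l : ℝ) : Prop where
  differentiable : Differentiable ℝ σ
  abs_deriv_le : ∀ x, |deriv σ x| ≤ l
  integral_eq_zero : ∫ x, σ x ∂gaussianReal 0 1 = 0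
  integral_sq_eq_one : ∫ x, σ x ^ 2 ∂gaussianReal 0 1 = 1

lemma abs_sqrt_sub_one_le {q : ℝ} (hq : 0 ≤ q) : |√q - 1| ≤ |q - 1| := by
  have factor : q - 1 = (√q - 1) * (√q + 1) := by linear_combination -Real.sq_sqrt hq
  rw [factor, abs_mul, abs_of_pos (by positivity : 0 < √q + 1)]
  exact le_mul_of_one_le_right (abs_nonneg _) (by linarith [Real.sqrt_nonneg q])

namespace IsNormalizedActivation

variable {σ : ℝ → ℝ} {l : ℝ}

lemma nonneg (hσ : IsNormalizedActivation σ l) : 0 ≤ l := (abs_nonneg _).trans (hσ.abs_deriv_le 0)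

lemma measurable (hσ : IsNormalizedActivation σ l) : Measurable σ :=
  hσ.differentiable.continuous.measurable

lemma measurable_comp_dotProduct (hσ : IsNormalizedActivation σ l) {d : ℕ} (x : Fin d → ℝ) :
    Measurable fun w : Fin d → ℝ => σ (w ⬝ᵥ x) :=
  hσ.measurable.comp (dotProductCLM x).measurable

lemma abs_sub_le (hσ : IsNormalizedActivation σ l) (x y : ℝ) : |σ x - σ y| ≤ l * |x - y| :=
  convex_univ.norm_image_sub_le_of_norm_deriv_le (fun x _ => hσ.differentiable x)
    (fun x _ => hσ.abs_deriv_le x) (Set.mem_univ y) (Set.mem_univ x)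

lemma memLp_comp (hσ : IsNormalizedActivation σ l) {Ω : Type*} [MeasurableSpace Ω]
    {μ : Measure Ω} [IsFiniteMeasure μ] {Y : Ω → ℝ} (hY : MemLp Y 2 μ) :
    MemLp (fun ω => σ (Y ω)) 2 μ := by
  have centered : MemLp (fun ω => σ (Y ω) - σ 0) 2 μ :=
    hY.of_le_mul (hσ.measurable.comp_aemeasurable hY.aemeasurable |>.sub_const _
      |>.aestronglyMeasurable) (ae_of_all _ fun ω => by simpa using hσ.abs_sub_le (Y ω) 0)
  simpa [Pi.add_def] using centered.add (memLp_const (σ 0))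

lemma memLp_gaussianReal (hσ : IsNormalizedActivation σ l) : MemLp σ 2 (gaussianReal 0 1) :=
  hσ.memLp_comp (memLp_id_gaussianReal 2)

lemma memLp_dotProduct (hσ : IsNormalizedActivation σ l) {d : ℕ} (x : Fin d → ℝ) :
    MemLp (fun w => σ (w ⬝ᵥ x)) 2 (gaussianVec d) :=
  hσ.memLp_comp (_root_.memLp_dotProduct x)

lemma abs_apply_zero_le (hσ : IsNormalizedActivation σ l) : |σ 0| ≤ l := by
  have hint := hσ.memLp_gaussianReal.integrable one_le_two
  have mean : ∫ z, (σ 0 - σ z) ∂gaussianReal 0 1 = σ 0 := by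
    rw [integral_sub (integrable_const _) hint, hσ.integral_eq_zero]
    simp
  have lip (z : ℝ) : |σ 0 - σ z| ≤ l / 2 + l / 2 * z ^ 2 := by
    have := hσ.abs_sub_le 0 z
    rw [zero_sub, abs_neg] at this
    linarith [mul_le_mul_of_nonneg_left (abs_le_half_add_half_mul_sq z) hσ.nonneg]
  simpa [mean] using abs_integral_gaussianReal_le lip

lemma abs_apply_le (hσ : IsNormalizedActivation σ l) (x : ℝ) : |σ x| ≤ l * (1 + |x|) := by
  have lip := hσ.abs_sub_le x 0
  rw [sub_zero] at lip
  linarith [abs_sub_abs_le_abs_sub (σ x) (σ 0), hσ.abs_apply_zero_le]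

lemma sq_apply_le (hσ : IsNormalizedActivation σ l) (x : ℝ) :
    σ x ^ 2 ≤ 2 * l ^ 2 * (1 + x ^ 2) := by
  calc σ x ^ 2 = |σ x| ^ 2 := (sq_abs _).symm
    _ ≤ (l * (1 + |x|)) ^ 2 := by
        gcongr
        exact hσ.abs_apply_le x
    _ ≤ 2 * l ^ 2 * (1 + x ^ 2) := by
        nlinarith [mul_nonneg (sq_nonneg l) (sq_nonneg (|x| - 1)), sq_abs x]

lemma one_le (hσ : IsNormalizedActivation σ l) : 1 ≤ l := by
  have lip (z : ℝ) : |(σ z - σ 0) ^ 2| ≤ 0 + l ^ 2 * z ^ 2 := by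
    rw [abs_pow, zero_add, ← sq_abs z, ← mul_pow]
    gcongr
    simpa using hσ.abs_sub_le z 0
  have second_moment_le := (le_abs_self _).trans (abs_integral_gaussianReal_le lip)
  have variance_eq : Var[fun z => σ z - σ 0; gaussianReal 0 1] = 1 := by
    rw [variance_sub_const hσ.measurable.aestronglyMeasurable, variance_of_integral_eq_zero
      hσ.measurable.aemeasurable hσ.integral_eq_zero, hσ.integral_sq_eq_one]
  have variance_le := variance_le_expectation_sq (μ := gaussianReal 0 1)
    (X := fun z => σ z - σ 0) (hσ.measurable.sub_const _).aestronglyMeasurable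
  rw [variance_eq] at variance_le
  rw [zero_add] at second_moment_le
  exact (one_le_sq_iff₀ hσ.nonneg).1 (variance_le.trans second_moment_le)

variable {d : ℕ}

lemma abs_integral_comp_dotProduct_le (hσ : IsNormalizedActivation σ l) (x : Fin d → ℝ) :
    |∫ w, σ (w ⬝ᵥ x) ∂gaussianVec d| ≤ l * |x ⬝ᵥ x - 1| := by
  have bound := abs_integral_comp_dotProduct_sub_le hσ.measurable
    ((hσ.memLp_dotProduct x).integrable one_le_two)
    (hσ.memLp_gaussianReal.integrable one_le_two) (a := l * |√(x ⬝ᵥ x) - 1| / 2)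
    (b := l * |√(x ⬝ᵥ x) - 1| / 2) fun z => ?_
  · rw [hσ.integral_eq_zero, sub_zero, add_halves] at bound
    exact bound.trans (mul_le_mul_of_nonneg_left
      (abs_sqrt_sub_one_le (dotProduct_self_nonneg x)) hσ.nonneg)
  · have lip := hσ.abs_sub_le (√(x ⬝ᵥ x) * z) z
    rw [← sub_one_mul, abs_mul, ← mul_assoc] at lip
    linarith [mul_le_mul_of_nonneg_left (abs_le_half_add_half_mul_sq z)
      (mul_nonneg hσ.nonneg (abs_nonneg (√(x ⬝ᵥ x) - 1)))]

lemma abs_sq_mul_sub_sq_le (hσ : IsNormalizedActivation σ l) {s : ℝ} (hs₀ : 0 ≤ s) (hs₂ : s ≤ 2)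
    (z : ℝ) : |σ (s * z) ^ 2 - σ z ^ 2| ≤ l ^ 2 * |s - 1| * (1 + 4 * z ^ 2) := by
  have lip : |σ (s * z) - σ z| ≤ l * (|s - 1| * |z|) := by
    rw [← abs_mul, sub_one_mul]
    exact hσ.abs_sub_le (s * z) z
  have growth : |σ (s * z) + σ z| ≤ l * (2 + 3 * |z|) := by
    have := hσ.abs_apply_le (s * z)
    rw [abs_mul, abs_of_nonneg hs₀] at this
    nlinarith [abs_add_le (σ (s * z)) (σ z), hσ.abs_apply_le z,
      mul_nonneg hσ.nonneg (mul_nonneg (sub_nonneg.2 hs₂) (abs_nonneg z))]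
  calc |σ (s * z) ^ 2 - σ z ^ 2| = |σ (s * z) - σ z| * |σ (s * z) + σ z| := by
        rw [← abs_mul]
        ring_nf
    _ ≤ (l * (|s - 1| * |z|)) * (l * (2 + 3 * |z|)) :=
        mul_le_mul lip growth (abs_nonneg _) ((abs_nonneg _).trans lip)
    _ = l ^ 2 * |s - 1| * (2 * |z| + 3 * |z| ^ 2) := by ring
    _ ≤ l ^ 2 * |s - 1| * (1 + 4 * z ^ 2) := by
        refine mul_le_mul_of_nonneg_left ?_ (by positivity)
        linarith [sq_abs z, abs_le_half_add_half_mul_sq z]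

lemma abs_integral_sq_comp_dotProduct_sub_one_le (hσ : IsNormalizedActivation σ l)
    {x : Fin d → ℝ} (hx : x ⬝ᵥ x ≤ 2) :
    |∫ w, σ (w ⬝ᵥ x) ^ 2 ∂gaussianVec d - 1| ≤ 5 * l ^ 2 * |x ⬝ᵥ x - 1| := by
  have sqrt_le : √(x ⬝ᵥ x) ≤ 2 := Real.sqrt_le_iff.2 ⟨zero_le_two, by linarith⟩
  have bound := abs_integral_comp_dotProduct_sub_le (hσ.measurable.pow_const 2)
    (hσ.memLp_dotProduct x).integrable_sq hσ.memLp_gaussianReal.integrable_sq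
    (a := l ^ 2 * |√(x ⬝ᵥ x) - 1|) (b := l ^ 2 * |√(x ⬝ᵥ x) - 1| * 4) fun z =>
      (hσ.abs_sq_mul_sub_sq_le (Real.sqrt_nonneg _) sqrt_le z).trans_eq (by ring)
  rw [hσ.integral_sq_eq_one] at bound
  nlinarith [mul_le_mul_of_nonneg_left (abs_sqrt_sub_one_le (dotProduct_self_nonneg x))
    (sq_nonneg l)]

lemma expMoment_sq_comp_dotProduct_le (hσ : IsNormalizedActivation σ l) {x : Fin d → ℝ}
    (hx : x ⬝ᵥ x ≤ 2) :
    expMoment (fun w => σ (w ⬝ᵥ x) ^ 2 / (16 * l ^ 2)) (gaussianVec d) ≤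
      ENNReal.ofReal (Real.exp 1) := by
  have hl : 0 < l := one_pos.trans_le hσ.one_le
  have law : IdentDistrib (fun w => ENNReal.ofReal (Real.exp ((w ⬝ᵥ x) ^ 2 / 8)))
      (fun z => ENNReal.ofReal (Real.exp ((√(x ⬝ᵥ x) * z) ^ 2 / 8))) (gaussianVec d)
      (gaussianReal 0 1) :=
    (identDistrib_dotProduct_gaussianReal x).comp
      (u := fun y => ENNReal.ofReal (Real.exp (y ^ 2 / 8))) (by fun_prop)
  have sqrt_two_le : √2 ≤ Real.exp (7 / 8) :=
    (Real.sqrt_le_iff.2 ⟨by norm_num, by norm_num⟩).trans (Real.add_one_le_exp (7 / 8))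
  calc expMoment (fun w => σ (w ⬝ᵥ x) ^ 2 / (16 * l ^ 2)) (gaussianVec d)
      ≤ expMoment (fun w => 1 / 8 + (w ⬝ᵥ x) ^ 2 / 8) (gaussianVec d) := by
        refine expMoment_mono fun w => ?_
        rw [div_le_iff₀ (by positivity)]
        linarith [hσ.sq_apply_le (w ⬝ᵥ x)]
    _ = ENNReal.ofReal (Real.exp (1 / 8)) *
          expMoment (fun z => (√(x ⬝ᵥ x) * z) ^ 2 / 8) (gaussianReal 0 1) := by
        rw [expMoment_const_add]
        exact congrArg _ law.lintegral_eq
    _ ≤ ENNReal.ofReal (Real.exp (1 / 8)) *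
          expMoment (fun z => 1 / 4 * z ^ 2) (gaussianReal 0 1) := by
        gcongr
        refine expMoment_mono fun z => ?_
        rw [mul_pow, Real.sq_sqrt (dotProduct_self_nonneg x)]
        nlinarith [sq_nonneg z]
    _ = ENNReal.ofReal (Real.exp (1 / 8) * √2) := by
        rw [expMoment_mul_sq_gaussianReal (by norm_num), ← ENNReal.ofReal_mul (Real.exp_pos _).le,
          ← Real.sqrt_inv]
        norm_num
    _ ≤ ENNReal.ofReal (Real.exp 1) := by
        refine ENNReal.ofReal_le_ofReal ((mul_le_mul_of_nonneg_left sqrt_two_le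
          (Real.exp_pos _).le).trans_eq ?_)
        rw [← Real.exp_add]
        norm_num

lemma expMoment_abs_mul_comp_dotProduct_le (hσ : IsNormalizedActivation σ l) {x y : Fin d → ℝ}
    (hx : x ⬝ᵥ x ≤ 2) (hy : y ⬝ᵥ y ≤ 2) :
    expMoment (fun w => |σ (w ⬝ᵥ x) * σ (w ⬝ᵥ y)| / (16 * l ^ 2)) (gaussianVec d) ≤
      ENNReal.ofReal (Real.exp 1) := by
  have hl : 0 < l := one_pos.trans_le hσ.one_le
  have holder := expMoment_sum_mul_le (μ := gaussianVec d) (s := Finset.univ)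
    (f := fun i w => σ (w ⬝ᵥ ![x, y] i) ^ 2 / (16 * l ^ 2)) (p := fun _ => 1 / 2) (M := fun _ => 1)
    (fun i _ => ((hσ.measurable_comp_dotProduct _).pow_const 2).div_const _)
    (fun _ _ => by norm_num) (by norm_num) fun i _ => ?_
  · norm_num [Fin.sum_univ_two] at holder
    refine (expMoment_mono fun w => ?_).trans holder
    rw [← mul_add, ← add_div, ← mul_div_assoc]
    gcongr
    rw [abs_mul]
    nlinarith [sq_abs (σ (w ⬝ᵥ x)), sq_abs (σ (w ⬝ᵥ y)),
      sq_nonneg (|σ (w ⬝ᵥ x)| - |σ (w ⬝ᵥ y)|)]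
  · fin_cases i
    exacts [hσ.expMoment_sq_comp_dotProduct_le hx, hσ.expMoment_sq_comp_dotProduct_le hy]

end IsNormalizedActivation

end Activation

section ActivationCovariance

namespace IsNormalizedActivation

variable {σ : ℝ → ℝ} {l : ℝ} {d : ℕ} {x y u : Fin d → ℝ}

lemma integrable_mul_comp_dotProduct (hσ : IsNormalizedActivation σ l) (x y : Fin d → ℝ) :
    Integrable (fun w => σ (w ⬝ᵥ x) * σ (w ⬝ᵥ y)) (gaussianVec d) :=
  (hσ.memLp_dotProduct x).integrable_mul (hσ.memLp_dotProduct y)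

lemma abs_integral_mul_comp_dotProduct_le_of_orthogonal (hσ : IsNormalizedActivation σ l)
    (h : x ⬝ᵥ u = 0) :
    |∫ w, σ (w ⬝ᵥ x) * σ (w ⬝ᵥ u) ∂gaussianVec d| ≤ l ^ 2 * (|x ⬝ᵥ x - 1| * |u ⬝ᵥ u - 1|) := by
  have product : ∫ w, σ (w ⬝ᵥ x) * σ (w ⬝ᵥ u) ∂gaussianVec d =
      (∫ w, σ (w ⬝ᵥ x) ∂gaussianVec d) * ∫ w, σ (w ⬝ᵥ u) ∂gaussianVec d :=
    ((indepFun_dotProduct h).comp hσ.measurable hσ.measurable).integral_fun_mul_eq_mul_integral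
      (hσ.memLp_dotProduct x).aestronglyMeasurable (hσ.memLp_dotProduct u).aestronglyMeasurable
  rw [product, abs_mul]
  refine (mul_le_mul (hσ.abs_integral_comp_dotProduct_le x) (hσ.abs_integral_comp_dotProduct_le u)
    (abs_nonneg _) (mul_nonneg hσ.nonneg (abs_nonneg _))).trans_eq ?_
  ring

lemma abs_integral_mul_comp_add_smul_sub_le (hσ : IsNormalizedActivation σ l)
    (x u : Fin d → ℝ) (r : ℝ) :
    |∫ w, σ (w ⬝ᵥ x) * (σ (w ⬝ᵥ (u + r • x)) - σ (w ⬝ᵥ u)) ∂gaussianVec d| ≤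
      l ^ 2 * |r| * (1 / 2 + 3 / 2 * (x ⬝ᵥ x)) := by
  have pointwise (w : Fin d → ℝ) : |σ (w ⬝ᵥ x) * (σ (w ⬝ᵥ (u + r • x)) - σ (w ⬝ᵥ u))| ≤
      l ^ 2 * |r| * (1 / 2) + l ^ 2 * |r| * (3 / 2) * (w ⬝ᵥ x) ^ 2 := by
    have lip := hσ.abs_sub_le (w ⬝ᵥ (u + r • x)) (w ⬝ᵥ u)
    rw [dotProduct_add, add_sub_cancel_left, dotProduct_smul, smul_eq_mul, abs_mul] at lip
    rw [abs_mul, dotProduct_add, dotProduct_smul, smul_eq_mul]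
    calc |σ (w ⬝ᵥ x)| * |σ (w ⬝ᵥ u + r * w ⬝ᵥ x) - σ (w ⬝ᵥ u)|
        ≤ (l * (1 + |w ⬝ᵥ x|)) * (l * (|r| * |w ⬝ᵥ x|)) :=
          mul_le_mul (hσ.abs_apply_le _) lip (abs_nonneg _)
            ((abs_nonneg _).trans (hσ.abs_apply_le _))
      _ = l ^ 2 * |r| * (|w ⬝ᵥ x| + (w ⬝ᵥ x) ^ 2) := by
          rw [← sq_abs (w ⬝ᵥ x)]
          ring
      _ ≤ l ^ 2 * |r| * ((1 / 2 + 1 / 2 * (w ⬝ᵥ x) ^ 2) + (w ⬝ᵥ x) ^ 2) := by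
          gcongr
          exact abs_le_half_add_half_mul_sq _
      _ = _ := by ring
  refine (abs_integral_le_of_abs_le_add_mul_sq (_root_.memLp_dotProduct x) pointwise).trans_eq ?_
  rw [integral_dotProduct_sq_gaussianVec]
  ring

lemma abs_integral_mul_comp_dotProduct_le_six (hσ : IsNormalizedActivation σ l)
    (hx : x ⬝ᵥ x ≤ 2) (hy : y ⬝ᵥ y ≤ 2) :
    |∫ w, σ (w ⬝ᵥ x) * σ (w ⬝ᵥ y) ∂gaussianVec d| ≤ 6 * l ^ 2 := by
  have second_moment_le {x : Fin d → ℝ} (hx : x ⬝ᵥ x ≤ 2) :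
      ∫ w, σ (w ⬝ᵥ x) ^ 2 ∂gaussianVec d ≤ 6 * l ^ 2 := by
    have deviation := (abs_le.1 (hσ.abs_integral_sq_comp_dotProduct_sub_one_le hx)).2
    have distance : |x ⬝ᵥ x - 1| ≤ 1 := abs_le.2 ⟨by linarith [dotProduct_self_nonneg x],
      by linarith⟩
    nlinarith [hσ.one_le, mul_le_mul_of_nonneg_left distance (sq_nonneg l)]
  have hx' := (hσ.memLp_dotProduct x).integrable_sq.const_mul (1 / 2)
  have hy' := (hσ.memLp_dotProduct y).integrable_sq.const_mul (1 / 2)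
  have amgm (w : Fin d → ℝ) : ‖σ (w ⬝ᵥ x) * σ (w ⬝ᵥ y)‖ ≤
      1 / 2 * σ (w ⬝ᵥ x) ^ 2 + 1 / 2 * σ (w ⬝ᵥ y) ^ 2 := by
    rw [Real.norm_eq_abs, abs_mul, ← sq_abs (σ (w ⬝ᵥ x)), ← sq_abs (σ (w ⬝ᵥ y))]
    linarith [two_mul_le_add_sq |σ (w ⬝ᵥ x)| |σ (w ⬝ᵥ y)|]
  refine (norm_integral_le_of_norm_le (hx'.add hy') (ae_of_all _ amgm)).trans ?_
  rw [integral_add' hx' hy', integral_const_mul, integral_const_mul]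
  linarith [second_moment_le hx, second_moment_le hy]

/- Splitting off the component of `y` along `x` leaves a vector orthogonal to `x`. -/
lemma abs_integral_mul_comp_dotProduct_le_of_le_half (hσ : IsNormalizedActivation σ l) {ε : ℝ}
    (hε : ε ≤ 1 / 2) (hx : |x ⬝ᵥ x - 1| ≤ ε) (hy : |y ⬝ᵥ y - 1| ≤ ε) (hxy : |x ⬝ᵥ y| ≤ ε) :
    |∫ w, σ (w ⬝ᵥ x) * σ (w ⬝ᵥ y) ∂gaussianVec d| ≤ 12 * l ^ 2 * ε := by
  obtain ⟨hx₁, hx₂⟩ := abs_le.1 hx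
  have hε₀ : 0 ≤ ε := (abs_nonneg _).trans hx
  have hxx : 0 < x ⬝ᵥ x := by linarith
  set r := (x ⬝ᵥ y) / (x ⬝ᵥ x)
  set u := y - r • x
  have r_mul : r * (x ⬝ᵥ x) = x ⬝ᵥ y := div_mul_cancel₀ _ hxx.ne'
  have abs_r_le : |r| ≤ 2 * ε := by
    rw [abs_div, abs_of_pos hxx, div_le_iff₀ hxx]
    nlinarith
  have orthogonal : x ⬝ᵥ u = 0 := by
    rw [dotProduct_sub, dotProduct_smul, smul_eq_mul, r_mul, sub_self]
  have pythagoras : y ⬝ᵥ y = u ⬝ᵥ u + r * (x ⬝ᵥ y) := by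
    rw [← r_mul, ← sub_add_cancel y (r • x)]
    simp only [add_dotProduct, dotProduct_add, smul_dotProduct, dotProduct_smul, smul_eq_mul]
    rw [show y - r • x = u from rfl, dotProduct_comm u x, orthogonal]
    ring
  have u_norm : |u ⬝ᵥ u - 1| ≤ 2 * ε := by
    have := mul_le_mul abs_r_le hxy (abs_nonneg _) (by positivity)
    rw [← abs_mul] at this
    rw [show u ⬝ᵥ u - 1 = (y ⬝ᵥ y - 1) - r * (x ⬝ᵥ y) by linarith]
    nlinarith [abs_sub (y ⬝ᵥ y - 1) (r * (x ⬝ᵥ y))]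
  have main : |∫ w, σ (w ⬝ᵥ x) * σ (w ⬝ᵥ u) ∂gaussianVec d| ≤ l ^ 2 * (ε * (2 * ε)) :=
    (hσ.abs_integral_mul_comp_dotProduct_le_of_orthogonal orthogonal).trans (by gcongr)
  have correction := (hσ.abs_integral_mul_comp_add_smul_sub_le x u r).trans
    (show _ ≤ l ^ 2 * (2 * ε) * (1 / 2 + 3 / 2 * 2) by gcongr; linarith)
  simp only [mul_sub, u, sub_add_cancel] at correction
  rw [integral_sub (hσ.integrable_mul_comp_dotProduct x y)
    (hσ.integrable_mul_comp_dotProduct x u)] at correction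
  have : l ^ 2 * (ε * (2 * ε)) ≤ l ^ 2 * ε := by gcongr; nlinarith
  have : 0 ≤ l ^ 2 * ε := by positivity
  linarith [abs_sub_abs_le_abs_sub (∫ w, σ (w ⬝ᵥ x) * σ (w ⬝ᵥ y) ∂gaussianVec d)
    (∫ w, σ (w ⬝ᵥ x) * σ (w ⬝ᵥ u) ∂gaussianVec d)]

lemma abs_integral_mul_comp_dotProduct_le (hσ : IsNormalizedActivation σ l) {ε : ℝ}
    (hε : ε ≤ 1) (hx : |x ⬝ᵥ x - 1| ≤ ε) (hy : |y ⬝ᵥ y - 1| ≤ ε) (hxy : |x ⬝ᵥ y| ≤ ε) :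
    |∫ w, σ (w ⬝ᵥ x) * σ (w ⬝ᵥ y) ∂gaussianVec d| ≤ 12 * l ^ 2 * ε := by
  rcases le_total ε (1 / 2) with small | large
  · exact hσ.abs_integral_mul_comp_dotProduct_le_of_le_half small hx hy hxy
  · have := hσ.abs_integral_mul_comp_dotProduct_le_six (x := x) (y := y)
      (by linarith [(abs_le.1 hx).2]) (by linarith [(abs_le.1 hy).2])
    nlinarith [sq_nonneg l]

end IsNormalizedActivation

end ActivationCovariance

section Nets

open Metric
open scoped NNReal

variable {E F : Type*} [NormedAddCommGroup E]

lemma exists_norm_sub_le_of_isCover {N : Set E} (hN : IsCover (1 / 2) (closedBall 0 1) N) {u : E}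
    (hu : ‖u‖ ≤ 1) : ∃ v ∈ N, ‖u - v‖ ≤ 1 / 2 := by
  have := isCover_iff_subset_iUnion_closedBall.1 hN (mem_closedBall_zero_iff.2 hu)
  simpa [mem_closedBall, dist_eq_norm] using this

variable [NormedSpace ℝ E]

lemma card_le_of_half_lt_norm_sub [FiniteDimensional ℝ E] (s : Finset E) (hs : ∀ x ∈ s, ‖x‖ ≤ 1)
    (hsep : ∀ x ∈ s, ∀ y ∈ s, x ≠ y → 1 / 2 < ‖x - y‖) : s.card ≤ 5 ^ Module.finrank ℝ E := by
  classical
  have two_smul_injective : Function.Injective fun x : E => (2 : ℝ) • x :=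
    smul_right_injective E two_ne_zero
  rw [← Finset.card_image_of_injective s two_smul_injective]
  refine Besicovitch.card_le_of_separated _ ?_ ?_ <;>
    simp only [Finset.forall_mem_image, two_smul_injective.ne_iff, ← smul_sub, norm_smul,
      Real.norm_ofNat]
  · exact fun x hx => by linarith [hs x hx]
  · exact fun x hx y hy hxy => by linarith [hsep x hx y hy (by simpa using hxy)]

lemma packingNumber_closedBall_half_le [FiniteDimensional ℝ E] :
    packingNumber (1 / 2 : ℝ≥0) (closedBall (0 : E) 1) ≤ 5 ^ Module.finrank ℝ E := by
  refine iSup_le fun C => iSup_le fun hC => iSup_le fun hsep => ?_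
  by_contra! hlt
  obtain ⟨D, hDC, hD⟩ := Set.exists_subset_encard_eq (Order.add_one_le_of_lt hlt)
  have hDfin : D.Finite := Set.finite_of_encard_eq_coe (k := 5 ^ Module.finrank ℝ E + 1) (by simpa)
  lift D to Finset E using hDfin
  have hDcard : D.card ≤ 5 ^ Module.finrank ℝ E :=
    card_le_of_half_lt_norm_sub D (fun x hx => by simpa using hC (hDC hx)) fun x hx y hy hxy => by
      have : (1 / 2 : ℝ≥0) < edist x y := hsep (hDC hx) (hDC hy) hxy
      rw [edist_nndist] at this
      rw [← dist_eq_norm, ← coe_nndist]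
      exact_mod_cast this
  rw [Set.encard_coe_eq_coe_finsetCard] at hD
  have : D.card = 5 ^ Module.finrank ℝ E + 1 := by exact_mod_cast hD
  omega

variable (E) in
lemma exists_finset_isCover_closedBall [FiniteDimensional ℝ E] :
    ∃ N : Finset E, N.card ≤ 5 ^ Module.finrank ℝ E ∧ (N : Set E) ⊆ closedBall 0 1 ∧
      IsCover (1 / 2) (closedBall (0 : E) 1) N := by
  have hle := (coveringNumber_le_packingNumber (1 / 2) (closedBall (0 : E) 1)).trans
    packingNumber_closedBall_half_le
  obtain ⟨N, hN, hfin, hcover, hcard⟩ :=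
    exists_set_encard_eq_coveringNumber <| ne_top_of_le_ne_top
      (ENat.pow_ne_top_iff.2 (.inl (ENat.natCast_ne_top 5))) hle
  lift N to Finset E using hfin
  refine ⟨N, ?_, hN, hcover⟩
  rw [← hcard, Set.encard_coe_eq_coe_finsetCard] at hle
  exact_mod_cast hle

lemma norm_clm_le_two_mul_of_isCover [SeminormedAddCommGroup F] [NormedSpace ℝ F] {N : Set E}
    (hN : IsCover (1 / 2) (closedBall 0 1) N) (A : E →L[ℝ] F) {K : ℝ} (hK : 0 ≤ K)
    (h : ∀ v ∈ N, ‖A v‖ ≤ K) : ‖A‖ ≤ 2 * K := by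
  suffices ‖A‖ ≤ K + ‖A‖ * (1 / 2) by linarith
  refine A.opNorm_le_of_unit_norm (by positivity) fun u hu => ?_
  obtain ⟨v, hv, huv⟩ := exists_norm_sub_le_of_isCover hN hu.le
  calc ‖A u‖ = ‖A v + A (u - v)‖ := by rw [map_sub, add_sub_cancel]
    _ ≤ ‖A v‖ + ‖A (u - v)‖ := norm_add_le _ _
    _ ≤ K + ‖A‖ * (1 / 2) := add_le_add (h v hv) (A.le_opNorm_of_le huv)

lemma norm_le_two_mul_of_isCover {H : Type*} [NormedAddCommGroup H] [InnerProductSpace ℝ H]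
    {N : Set H} (hN : IsCover (1 / 2) (closedBall 0 1) N) (x : H) {K : ℝ} (hK : 0 ≤ K)
    (h : ∀ v ∈ N, inner ℝ v x ≤ K) : ‖x‖ ≤ 2 * K := by
  rcases eq_or_ne x 0 with rfl | hx
  · simpa using hK
  obtain ⟨v, hv, huv⟩ := exists_norm_sub_le_of_isCover hN (norm_smul_inv_norm (𝕜 := ℝ) hx).le
  set u := ((‖x‖ : ℝ)⁻¹ : ℝ) • x
  have inner_unit : inner ℝ u x = ‖x‖ := by
    rw [real_inner_smul_left, real_inner_self_eq_norm_sq]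
    field_simp
  have inner_diff : inner ℝ (u - v) x ≤ 1 / 2 * ‖x‖ :=
    (real_inner_le_norm _ _).trans (by gcongr; exact huv)
  rw [inner_sub_left, inner_unit] at inner_diff
  linarith [h v hv]

lemma measure_biUnion_le_exp_neg {Ω ι : Type*} [MeasurableSpace Ω] {μ : Measure Ω}
    {n : ℕ} {s : Finset ι} (hs : s.card ≤ 5 ^ n) {S : ι → Set Ω}
    (h : ∀ i ∈ s, μ (S i) ≤ ENNReal.ofReal (Real.exp (-(3 * n)))) :
    μ (⋃ i ∈ s, S i) ≤ ENNReal.ofReal (Real.exp (-n)) := by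
  have five_le : (5 : ℝ) ≤ Real.exp 2 := by
    rw [← one_add_one_eq_two, Real.exp_add]
    nlinarith [Real.exp_one_gt_d9]
  have card_le : (s.card : ℝ) ≤ Real.exp (n * 2) := by
    rw [Real.exp_nat_mul]
    exact (Nat.cast_le.2 hs).trans (by push_cast; gcongr)
  calc μ (⋃ i ∈ s, S i)
      ≤ s.card • ENNReal.ofReal (Real.exp (-(3 * n))) :=
        (measure_biUnion_finset_le s S).trans (Finset.sum_le_card_nsmul _ _ _ h)
    _ = ENNReal.ofReal (s.card * Real.exp (-(3 * n))) := by
        rw [nsmul_eq_mul, ENNReal.ofReal_mul (by positivity), ENNReal.ofReal_natCast]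
    _ ≤ ENNReal.ofReal (Real.exp (n * 2) * Real.exp (-(3 * n))) := by gcongr
    _ = ENNReal.ofReal (Real.exp (-n)) := by rw [← Real.exp_add]; ring_nf

lemma exists_isCover_measure_pi_sum_ge_le [FiniteDimensional ℝ E] {Ω ι : Type*} [MeasurableSpace Ω]
    {μ : Measure Ω} [IsProbabilityMeasure μ] [Fintype ι] {f : E → Ω → ℝ}
    (hf : ∀ v, Measurable (f v))
    (h : ∀ v, ‖v‖ ≤ 1 → expMoment (f v) μ ≤ ENNReal.ofReal (Real.exp 1)) :
    ∃ N : Finset E, IsCover (1 / 2) (closedBall (0 : E) 1) N ∧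
      (Measure.pi fun _ : ι => μ)
          {W | ∃ v ∈ N, Fintype.card ι + 3 * Module.finrank ℝ E ≤ ∑ i, f v (W i)} ≤
        ENNReal.ofReal (Real.exp (-Module.finrank ℝ E)) := by
  obtain ⟨N, hcard, hball, hcover⟩ := exists_finset_isCover_closedBall E
  refine ⟨N, hcover, ?_⟩
  simp only [Set.ofPred_exists, exists_prop.symm]
  refine measure_biUnion_le_exp_neg hcard fun v hv => ?_
  refine (measure_pi_sum_ge_le (hf v) (h v (mem_closedBall_zero_iff.1 (hball hv))) _).trans_eq ?_
  ring_nf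

variable {m n : ℕ} {N : Finset (EuclideanSpace ℝ (Fin n))} {K : ℝ}

lemma sum_sq_le_one_of_norm_le_one {v : EuclideanSpace ℝ (Fin n)} (hv : ‖v‖ ≤ 1) :
    ∑ α, v α ^ 2 ≤ 1 := by
  rw [← EuclideanSpace.real_norm_sq_eq]
  exact pow_le_one₀ (norm_nonneg v) hv

lemma opNorm_le_two_mul_of_isCover
    (hN : IsCover (1 / 2) (closedBall 0 1) (N : Set (EuclideanSpace ℝ (Fin n))))
    (A : Matrix (Fin m) (Fin n) ℝ) (hK : 0 ≤ K)
    (h : ∀ v ∈ N, ∑ i, (∑ α, v α * A i α) ^ 2 ≤ K ^ 2) : opNorm A ≤ 2 * K := by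
  refine norm_clm_le_two_mul_of_isCover hN _ hK fun v hv => abs_le_of_sq_le_sq' ?_ hK |>.2
  rw [EuclideanSpace.real_norm_sq_eq]
  simpa [Matrix.toLpLin_apply, Matrix.mulVec, dotProduct, mul_comm] using h v hv

lemma sum_sq_le_of_isCover
    (hN : IsCover (1 / 2) (closedBall 0 1) (N : Set (EuclideanSpace ℝ (Fin n))))
    (f : Fin n → ℝ) (hK : 0 ≤ K) (h : ∀ v ∈ N, ∑ α, v α * f α ≤ K) :
    ∑ α, f α ^ 2 ≤ (2 * K) ^ 2 := by
  have hnorm : ‖WithLp.toLp 2 f‖ ≤ 2 * K := norm_le_two_mul_of_isCover hN _ hK fun v hv => by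
    simpa [PiLp.inner_apply, mul_comm] using h v hv
  simpa [EuclideanSpace.real_norm_sq_eq] using pow_le_pow_left₀ (norm_nonneg _) hnorm 2

end Nets

section LinearCombinations

lemma pi_sq_le_ten : Real.pi ^ 2 ≤ 10 := by nlinarith [Real.pi_lt_d2, Real.pi_pos]

namespace IsNormalizedActivation

variable {σ : ℝ → ℝ} {l B : ℝ} {d n : ℕ} {X : Matrix (Fin d) (Fin n) ℝ} {v : Fin n → ℝ}

lemma sq_deriv_le (hσ : IsNormalizedActivation σ l) (x : ℝ) : deriv σ x ^ 2 ≤ l ^ 2 :=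
  sq_le_sq.2 ((hσ.abs_deriv_le x).trans (le_abs_self l))

lemma measurable_sum_mul_comp (hσ : IsNormalizedActivation σ l) (X : Matrix (Fin d) (Fin n) ℝ)
    (v : Fin n → ℝ) : Measurable fun w => ∑ α, v α * σ (w ⬝ᵥ X.col α) :=
  Finset.measurable_fun_sum _ fun _ _ => (hσ.measurable_comp_dotProduct _).const_mul _

lemma integral_sum_mul_comp (hσ : IsNormalizedActivation σ l) (X : Matrix (Fin d) (Fin n) ℝ)
    (v : Fin n → ℝ) :
    ∫ w, ∑ α, v α * σ (w ⬝ᵥ X.col α) ∂gaussianVec d =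
      ∑ α, v α * ∫ w, σ (w ⬝ᵥ X.col α) ∂gaussianVec d := by
  rw [integral_finsetSum _ fun α _ =>
    ((hσ.memLp_dotProduct (X.col α)).integrable one_le_two).const_mul _]
  simp_rw [integral_const_mul]

lemma integral_sum_mul_sq_comp (hσ : IsNormalizedActivation σ l) (X : Matrix (Fin d) (Fin n) ℝ)
    (v : Fin n → ℝ) :
    ∫ w, ∑ α, v α * σ (w ⬝ᵥ X.col α) ^ 2 ∂gaussianVec d =
      ∑ α, v α * ∫ w, σ (w ⬝ᵥ X.col α) ^ 2 ∂gaussianVec d := by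
  rw [integral_finsetSum _ fun α _ => (hσ.memLp_dotProduct (X.col α)).integrable_sq.const_mul _]
  simp_rw [integral_const_mul]

lemma expMoment_mul_sum_mul_comp_sub_integral_le (hσ : IsNormalizedActivation σ l)
    (X : Matrix (Fin d) (Fin n) ℝ) (hv : ∑ α, v α ^ 2 ≤ 1) (t : ℝ) :
    expMoment (fun w => t * (∑ α, v α * σ (w ⬝ᵥ X.col α) -
        ∫ z, ∑ α, v α * σ (z ⬝ᵥ X.col α) ∂gaussianVec d)) (gaussianVec d) ≤
      ENNReal.ofReal (Real.exp (5 / 2 * (l * opNorm X) ^ 2 * t ^ 2 / 2)) := by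
  have concentration := expMoment_sum_mul_comp_sub_integral_le X hσ.differentiable
    (fun α => t * v α) (integrable_finsetSum _ fun α _ =>
      ((hσ.memLp_dotProduct (X.col α)).integrable one_le_two).const_mul _)
  simp only [mul_assoc t, ← Finset.mul_sum, integral_const_mul, ← mul_sub] at concentration
  have sum_le (w : Fin d → ℝ) : ∑ α, (t * (v α * deriv σ (w ⬝ᵥ X.col α))) ^ 2 ≤ t ^ 2 * l ^ 2 :=
    calc ∑ α, (t * (v α * deriv σ (w ⬝ᵥ X.col α))) ^ 2
        = ∑ α, t ^ 2 * v α ^ 2 * deriv σ (w ⬝ᵥ X.col α) ^ 2 := by simp_rw [mul_pow, mul_assoc]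
      _ ≤ ∑ α, t ^ 2 * v α ^ 2 * l ^ 2 :=
        Finset.sum_le_sum fun α _ => mul_le_mul_of_nonneg_left (hσ.sq_deriv_le _) (by positivity)
      _ = t ^ 2 * l ^ 2 * ∑ α, v α ^ 2 := by
        rw [Finset.mul_sum]; exact Finset.sum_congr rfl fun α _ => by ring
      _ ≤ t ^ 2 * l ^ 2 := mul_le_of_le_one_right (by positivity) hv
  refine concentration.trans ((expMoment_mono (g := fun _ =>
    5 / 2 * (l * opNorm X) ^ 2 * t ^ 2 / 2) fun w => ?_).trans_eq (by simp [expMoment]))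
  calc Real.pi ^ 2 / 8 * (opNorm X ^ 2 * ∑ α, (t * (v α * deriv σ (w ⬝ᵥ X.col α))) ^ 2)
      ≤ 10 / 8 * (opNorm X ^ 2 * (t ^ 2 * l ^ 2)) := by
        gcongr
        · exact pi_sq_le_ten
        · exact sum_le w
    _ = 5 / 2 * (l * opNorm X) ^ 2 * t ^ 2 / 2 := by ring

lemma sq_integral_sum_mul_comp_le (hσ : IsNormalizedActivation σ l)
    (X : Matrix (Fin d) (Fin n) ℝ) (hv : ∑ α, v α ^ 2 ≤ 1) :
    (∫ w, ∑ α, v α * σ (w ⬝ᵥ X.col α) ∂gaussianVec d) ^ 2 ≤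
      l ^ 2 * ∑ α, (X.col α ⬝ᵥ X.col α - 1) ^ 2 := by
  have sq_mean_le (α : Fin n) : (∫ w, σ (w ⬝ᵥ X.col α) ∂gaussianVec d) ^ 2 ≤
      l ^ 2 * (X.col α ⬝ᵥ X.col α - 1) ^ 2 := by
    rw [← sq_abs, ← sq_abs (_ - 1), ← mul_pow]
    exact pow_le_pow_left₀ (abs_nonneg _) (hσ.abs_integral_comp_dotProduct_le _) 2
  calc (∫ w, ∑ α, v α * σ (w ⬝ᵥ X.col α) ∂gaussianVec d) ^ 2
      ≤ (∑ α, v α ^ 2) * ∑ α, (∫ w, σ (w ⬝ᵥ X.col α) ∂gaussianVec d) ^ 2 := by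
        rw [hσ.integral_sum_mul_comp]; exact Finset.sum_mul_sq_le_sq_mul_sq _ _ _
    _ ≤ ∑ α, (∫ w, σ (w ⬝ᵥ X.col α) ∂gaussianVec d) ^ 2 :=
        mul_le_of_le_one_left (by positivity) hv
    _ ≤ l ^ 2 * ∑ α, (X.col α ⬝ᵥ X.col α - 1) ^ 2 := by
        rw [Finset.mul_sum]; exact Finset.sum_le_sum fun α _ => sq_mean_le α

lemma expMoment_sq_sum_mul_comp_le (hσ : IsNormalizedActivation σ l) (hB : 0 < B)
    (hXB : opNorm X ≤ B) (hcol : ∑ α, (X.col α ⬝ᵥ X.col α - 1) ^ 2 ≤ B ^ 2)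
    (hv : ∑ α, v α ^ 2 ≤ 1) :
    expMoment (fun w => (∑ α, v α * σ (w ⬝ᵥ X.col α)) ^ 2 / (20 * (l * B) ^ 2)) (gaussianVec d) ≤
      ENNReal.ofReal (Real.exp 1) := by
  have hl : 0 < l := zero_lt_one.trans_le hσ.one_le
  have hX₀ : 0 ≤ opNorm X := norm_nonneg _
  set m := ∫ z, ∑ α, v α * σ (z ⬝ᵥ X.col α) ∂gaussianVec d
  have mean_le : m ^ 2 ≤ (l * B) ^ 2 := (hσ.sq_integral_sum_mul_comp_le X hv).trans
    (by rw [mul_pow]; gcongr)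
  have centered : expMoment (fun w => (∑ α, v α * σ (w ⬝ᵥ X.col α) - m) ^ 2 /
      (4 * (5 / 2 * (l * B) ^ 2))) (gaussianVec d) ≤ ENNReal.ofReal √2 :=
    expMoment_sq_div_le_of_subgaussian ((hσ.measurable_sum_mul_comp X v).sub_const m)
      (by positivity) fun t =>
        (hσ.expMoment_mul_sum_mul_comp_sub_integral_le X hv t).trans (by gcongr)
  have pointwise (w : Fin d → ℝ) : (∑ α, v α * σ (w ⬝ᵥ X.col α)) ^ 2 / (20 * (l * B) ^ 2) ≤
      1 / 10 + (∑ α, v α * σ (w ⬝ᵥ X.col α) - m) ^ 2 / (4 * (5 / 2 * (l * B) ^ 2)) := by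
    set y := ∑ α, v α * σ (w ⬝ᵥ X.col α)
    rw [div_le_iff₀ (by positivity)]
    field_simp
    nlinarith [sq_nonneg (y - 2 * m)]
  have sqrt_two_le : √2 ≤ Real.exp (9 / 10) :=
    (Real.sqrt_le_iff.2 ⟨by norm_num, by norm_num⟩).trans (Real.add_one_le_exp _)
  calc _ ≤ ENNReal.ofReal (Real.exp (1 / 10)) * ENNReal.ofReal (Real.exp (9 / 10)) := by
        refine (expMoment_mono pointwise).trans ?_
        rw [expMoment_const_add]
        gcongr
        exact centered.trans (ENNReal.ofReal_le_ofReal sqrt_two_le)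
    _ = ENNReal.ofReal (Real.exp 1) := by
        rw [← ENNReal.ofReal_mul (Real.exp_pos _).le, ← Real.exp_add]; norm_num

lemma expMoment_sum_sq_mul_sq_comp_le (hσ : IsNormalizedActivation σ l)
    (hX : ∀ α, X.col α ⬝ᵥ X.col α ≤ 2) (hv : ∑ α, v α ^ 2 ≤ 1) :
    expMoment (fun w => ∑ α, v α ^ 2 * (σ (w ⬝ᵥ X.col α) ^ 2 / (16 * l ^ 2))) (gaussianVec d) ≤
      ENNReal.ofReal (Real.exp 1) := by
  refine (expMoment_sum_mul_le
    (fun α _ => ((hσ.measurable_comp_dotProduct (X.col α)).pow_const 2).div_const (16 * l ^ 2))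
    (fun α _ => sq_nonneg (v α)) hv
    fun α _ => hσ.expMoment_sq_comp_dotProduct_le (hX α)).trans ?_
  gcongr
  simpa using hv

lemma expMoment_sum_mul_sq_sub_integral_le (hσ : IsNormalizedActivation σ l) (hB : 0 < B)
    (hXB : opNorm X ≤ B) (hX : ∀ α, X.col α ⬝ᵥ X.col α ≤ 2) (hv : ∑ α, v α ^ 2 ≤ 1) :
    expMoment (fun w => (∑ α, v α * (σ (w ⬝ᵥ X.col α) ^ 2 -
        ∫ z, σ (z ⬝ᵥ X.col α) ^ 2 ∂gaussianVec d)) / (10 * B * l ^ 2)) (gaussianVec d) ≤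
      ENNReal.ofReal (Real.exp 1) := by
  have hl : 0 < l := zero_lt_one.trans_le hσ.one_le
  have hX₀ : 0 ≤ opNorm X := norm_nonneg _
  have concentration := expMoment_sum_mul_comp_sub_integral_le X
    (hσ.differentiable.fun_pow 2) (fun α => v α / (10 * B * l ^ 2))
    (integrable_finsetSum _ fun α _ => (hσ.memLp_dotProduct (X.col α)).integrable_sq.const_mul _)
  rw [hσ.integral_sum_mul_sq_comp] at concentration
  have variance_le (w : Fin d → ℝ) : Real.pi ^ 2 / 8 * (opNorm X ^ 2 * ∑ α,
      (v α / (10 * B * l ^ 2) * deriv (fun x => σ x ^ 2) (w ⬝ᵥ X.col α)) ^ 2) ≤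
      ∑ α, v α ^ 2 * (σ (w ⬝ᵥ X.col α) ^ 2 / (16 * l ^ 2)) := by
    rw [Finset.mul_sum, Finset.mul_sum]
    refine Finset.sum_le_sum fun α _ => ?_
    rw [deriv_fun_pow (hσ.differentiable _)]
    set s := σ (w ⬝ᵥ X.col α)
    set s' := deriv σ (w ⬝ᵥ X.col α)
    have hs' : s' ^ 2 ≤ l ^ 2 := hσ.sq_deriv_le _
    set b := v α / (10 * B * l ^ 2) with hb
    calc Real.pi ^ 2 / 8 * (opNorm X ^ 2 * (b * (2 * s ^ (2 - 1) * s')) ^ 2)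
        = Real.pi ^ 2 / 8 * (opNorm X ^ 2 * b ^ 2 * (4 * s ^ 2) * s' ^ 2) := by ring
      _ ≤ 10 / 8 * (B ^ 2 * b ^ 2 * (4 * s ^ 2) * l ^ 2) := by
          gcongr
          exact pi_sq_le_ten
      _ = v α ^ 2 * (s ^ 2 / (20 * l ^ 2)) := by rw [hb]; field_simp; ring
      _ ≤ v α ^ 2 * (s ^ 2 / (16 * l ^ 2)) := by gcongr; norm_num
  refine le_trans (expMoment_mono fun w => le_of_eq ?_) (concentration.trans
    ((expMoment_mono variance_le).trans (hσ.expMoment_sum_sq_mul_sq_comp_le hX hv)))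
  rw [Finset.sum_div, ← Finset.sum_sub_distrib]
  exact Finset.sum_congr rfl fun α _ => by ring

end IsNormalizedActivation

end LinearCombinations

section Propagation

lemma ofReal_one_sub_le_measure_of_compl_le {Ω : Type*} [MeasurableSpace Ω] {μ : Measure Ω}
    [IsProbabilityMeasure μ] {s : Set Ω} {q : ℝ} (hq : 0 ≤ q) (h : μ sᶜ ≤ ENNReal.ofReal q) :
    ENNReal.ofReal (1 - q) ≤ μ s := by
  rw [ENNReal.ofReal_sub _ hq, ENNReal.ofReal_one, tsub_le_iff_right]
  calc 1 = μ (s ∪ sᶜ) := by rw [Set.union_compl_self, measure_univ]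
    _ ≤ μ s + ENNReal.ofReal q := (measure_union_le s sᶜ).trans (by gcongr)

lemma sum_sq_sub_le_two_mul_add_two_mul {ι : Type*} [Fintype ι] (f g h : ι → ℝ) :
    ∑ i, (f i - h i) ^ 2 ≤ 2 * ∑ i, (f i - g i) ^ 2 + 2 * ∑ i, (g i - h i) ^ 2 := by
  simp_rw [Finset.mul_sum, ← Finset.sum_add_distrib, ← mul_add]
  exact Finset.sum_le_sum fun i _ => by
    simpa only [sub_add_sub_cancel] using add_sq_le (a := f i - g i) (b := g i - h i)

variable {d n dc : ℕ} {X : Matrix (Fin d) (Fin n) ℝ} {ε B : ℝ}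

lemma col_dotProduct_self (X : Matrix (Fin d) (Fin n) ℝ) (α : Fin n) :
    X.col α ⬝ᵥ X.col α = ∑ i, X i α ^ 2 :=
  Finset.sum_congr rfl fun _ _ => (pow_two _).symm

namespace IsOrthonormal

lemma abs_col_dotProduct_self_sub_one_le (hX : IsOrthonormal ε B X) (α : Fin n) :
    |X.col α ⬝ᵥ X.col α - 1| ≤ ε :=
  col_dotProduct_self X α ▸ hX.1 α

lemma col_dotProduct_self_le_two (hX : IsOrthonormal ε B X) (hε : ε ≤ 1) (α : Fin n) :
    X.col α ⬝ᵥ X.col α ≤ 2 := by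
  linarith [(abs_le.1 (hX.abs_col_dotProduct_self_sub_one_le α)).2]

lemma sum_sq_col_dotProduct_self_sub_one_le (hX : IsOrthonormal ε B X) :
    ∑ α, (X.col α ⬝ᵥ X.col α - 1) ^ 2 ≤ B ^ 2 := by
  simpa only [col_dotProduct_self] using hX.2.2.2

lemma eps_nonneg [Nonempty (Fin n)] (hX : IsOrthonormal ε B X) : 0 ≤ ε :=
  (abs_nonneg _).trans (hX.1 (Classical.arbitrary _))

lemma bound_pos [Nonempty (Fin n)] (hX : IsOrthonormal ε B X) : 0 < B := by
  refine (((norm_nonneg _).trans hX.2.2.1 : 0 ≤ B)).lt_of_ne fun hB => ?_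
  let α : Fin n := Classical.arbitrary _
  have opNorm_eq : opNorm X = 0 := le_antisymm (hX.2.2.1.trans_eq hB.symm) (norm_nonneg _)
  have col_sq_le : X.col α ⬝ᵥ X.col α ≤ 0 := by
    simpa [opNorm_eq] using dotProduct_mulVec_self_le X (Pi.single α 1)
  have sum_le : (X.col α ⬝ᵥ X.col α - 1) ^ 2 ≤ 0 :=
    (Finset.single_le_sum (f := fun α => (X.col α ⬝ᵥ X.col α - 1) ^ 2)
      (fun _ _ => sq_nonneg _) (Finset.mem_univ α)).trans
      (hX.sum_sq_col_dotProduct_self_sub_one_le.trans_eq (by simp [← hB]))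
  nlinarith

end IsOrthonormal

/-- The random features `X̌ = σ(WX)/√ď` of the columns of `X`. The weights `W` are a function
because `gaussianMat` is a measure on functions. -/
noncomputable def featureMatrix (σ : ℝ → ℝ) (X : Matrix (Fin d) (Fin n) ℝ)
    (W : Fin dc → Fin d → ℝ) : Matrix (Fin dc) (Fin n) ℝ :=
  (√dc)⁻¹ • ((Matrix.of W * X).map σ)

lemma featureMatrix_apply (σ : ℝ → ℝ) (X : Matrix (Fin d) (Fin n) ℝ) (W : Fin dc → Fin d → ℝ)
    (i : Fin dc) (α : Fin n) : featureMatrix σ X W i α = (√dc)⁻¹ * σ (W i ⬝ᵥ X.col α) :=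
  rfl

lemma sum_featureMatrix_mul (σ : ℝ → ℝ) (X : Matrix (Fin d) (Fin n) ℝ) (W : Fin dc → Fin d → ℝ)
    (α β : Fin n) : ∑ i, featureMatrix σ X W i α * featureMatrix σ X W i β =
      (∑ i, σ (W i ⬝ᵥ X.col α) * σ (W i ⬝ᵥ X.col β)) / dc := by
  have inv_sqrt : (√(dc : ℝ))⁻¹ * (√(dc : ℝ))⁻¹ = (dc : ℝ)⁻¹ := by
    rw [← mul_inv, Real.mul_self_sqrt (Nat.cast_nonneg dc)]
  simp_rw [featureMatrix_apply, mul_mul_mul_comm _ _ (√(dc : ℝ))⁻¹, inv_sqrt, ← Finset.mul_sum]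
  exact inv_mul_eq_div _ _

lemma sum_featureMatrix_sq (σ : ℝ → ℝ) (X : Matrix (Fin d) (Fin n) ℝ) (W : Fin dc → Fin d → ℝ)
    (α : Fin n) : ∑ i, featureMatrix σ X W i α ^ 2 = (∑ i, σ (W i ⬝ᵥ X.col α) ^ 2) / dc := by
  simpa only [pow_two] using sum_featureMatrix_mul σ X W α α

lemma sum_sq_sum_mul_featureMatrix (σ : ℝ → ℝ) (X : Matrix (Fin d) (Fin n) ℝ)
    (W : Fin dc → Fin d → ℝ) (v : Fin n → ℝ) :
    ∑ i, (∑ α, v α * featureMatrix σ X W i α) ^ 2 =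
      (∑ i, (∑ α, v α * σ (W i ⬝ᵥ X.col α)) ^ 2) / dc := by
  simp_rw [featureMatrix_apply, mul_left_comm (v _), ← Finset.mul_sum, mul_pow, inv_pow,
    Real.sq_sqrt (Nat.cast_nonneg dc), ← Finset.mul_sum]
  exact inv_mul_eq_div _ _

namespace IsNormalizedActivation

variable {σ : ℝ → ℝ} {l : ℝ}

lemma measure_lt_abs_gram_sub_le (hσ : IsNormalizedActivation σ l)
    (hX : ∀ α, X.col α ⬝ᵥ X.col α ≤ 2) (hε₀ : 0 ≤ ε) (hε₁ : ε ≤ 1) (hdc : 0 < dc) (α β : Fin n) :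
    gaussianMat dc d {W | 208 * l ^ 2 * ε <
        |∑ i, featureMatrix σ X W i α * featureMatrix σ X W i β -
          ∫ w, σ (w ⬝ᵥ X.col α) * σ (w ⬝ᵥ X.col β) ∂gaussianVec d|} ≤
      ENNReal.ofReal (2 * Real.exp (-(dc * ε ^ 2))) := by
  have hl : 0 < l := zero_lt_one.trans_le hσ.one_le
  have hdc' : (0 : ℝ) < dc := Nat.cast_pos.2 hdc
  have bernstein := measure_pi_abs_sum_sub_integral_ge_le (ι := Fin dc)
    ((hσ.measurable_comp_dotProduct (X.col α)).mul (hσ.measurable_comp_dotProduct (X.col β)))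
    (by positivity) (hσ.expMoment_abs_mul_comp_dotProduct_le (hX α) (hX β)) hε₀ hε₁
  rw [Fintype.card_fin] at bernstein
  refine (measure_mono fun W hW => ?_).trans bernstein
  rw [Set.mem_ofPred_eq, sum_featureMatrix_mul, div_sub' hdc'.ne', abs_div, abs_of_pos hdc',
    lt_div_iff₀ hdc'] at hW
  simp only [Set.mem_ofPred_eq, Finset.sum_sub_distrib, Finset.sum_const, Finset.card_univ,
    Fintype.card_fin, nsmul_eq_mul]
  exact le_of_eq_of_le (by ring) hW.le

lemma measure_exists_lt_abs_gram_sub_le (hσ : IsNormalizedActivation σ l)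
    (hX : ∀ α, X.col α ⬝ᵥ X.col α ≤ 2) (hε₀ : 0 ≤ ε) (hε₁ : ε ≤ 1) (hdc : 0 < dc) :
    gaussianMat dc d {W | ∃ α β, 208 * l ^ 2 * ε <
        |∑ i, featureMatrix σ X W i α * featureMatrix σ X W i β -
          ∫ w, σ (w ⬝ᵥ X.col α) * σ (w ⬝ᵥ X.col β) ∂gaussianVec d|} ≤
      ENNReal.ofReal (2 * n ^ 2 * Real.exp (-(dc * ε ^ 2))) := by
  simp only [Set.ofPred_exists]
  refine (measure_iUnion_fintype_le _ _).trans ((Finset.sum_le_sum fun α _ =>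
    (measure_iUnion_fintype_le _ _).trans (Finset.sum_le_sum fun β _ =>
      hσ.measure_lt_abs_gram_sub_le hX hε₀ hε₁ hdc α β)).trans_eq ?_)
  simp only [Finset.sum_const, Finset.card_univ, Fintype.card_fin]
  rw [← ENNReal.ofReal_nsmul, ← ENNReal.ofReal_nsmul, nsmul_eq_mul, nsmul_eq_mul]
  ring_nf

lemma measure_lt_opNorm_featureMatrix_le (hσ : IsNormalizedActivation σ l) (hB : 0 < B)
    (hXB : opNorm X ≤ B) (hcol : ∑ α, (X.col α ⬝ᵥ X.col α - 1) ^ 2 ≤ B ^ 2) (hdc : 0 < dc) :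
    gaussianMat dc d {W | 16 * (1 + n / dc) * (l * B) < opNorm (featureMatrix σ X W)} ≤
      ENNReal.ofReal (Real.exp (-n)) := by
  have hl : 0 < l := zero_lt_one.trans_le hσ.one_le
  have : (0 : ℝ) < dc := Nat.cast_pos.2 hdc
  obtain ⟨N, hN, measure_le⟩ := exists_isCover_measure_pi_sum_ge_le (ι := Fin dc)
    (f := fun (v : EuclideanSpace ℝ (Fin n)) w =>
      (∑ α, v α * σ (w ⬝ᵥ X.col α)) ^ 2 / (20 * (l * B) ^ 2))
    (fun v => ((hσ.measurable_sum_mul_comp X v).pow_const 2).div_const _)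
    (fun v hv => hσ.expMoment_sq_sum_mul_comp_le hB hXB hcol (sum_sq_le_one_of_norm_le_one hv))
  rw [finrank_euclideanSpace_fin, Fintype.card_fin] at measure_le
  refine (measure_mono fun W hW => ?_).trans measure_le
  by_contra hgood
  simp only [Set.mem_ofPred_eq, not_exists, not_and, not_le] at hgood
  refine not_le.2 hW ((opNorm_le_two_mul_of_isCover hN _
    (K := 8 * (1 + n / dc) * (l * B)) (by positivity) fun v hv => ?_).trans_eq (by ring))
  have hWv := hgood v hv
  rw [← Finset.sum_div, div_lt_iff₀ (by positivity)] at hWv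
  rw [sum_sq_sum_mul_featureMatrix]
  calc (∑ i, (∑ α, v α * σ (W i ⬝ᵥ X.col α)) ^ 2) / dc
      ≤ (dc + 3 * n) * (20 * (l * B) ^ 2) / dc := by gcongr
    _ = (20 + 60 * (n / dc)) * (l * B) ^ 2 := by field_simp; ring
    _ ≤ (8 * (1 + n / dc)) ^ 2 * (l * B) ^ 2 := by
        have : (0 : ℝ) ≤ n / dc := by positivity
        gcongr
        nlinarith
    _ = (8 * (1 + n / dc) * (l * B)) ^ 2 := by ring

lemma measure_lt_sum_sq_gram_diag_sub_le (hσ : IsNormalizedActivation σ l) (hB : 0 < B)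
    (hXB : opNorm X ≤ B) (hX : ∀ α, X.col α ⬝ᵥ X.col α ≤ 2) (hdc : 0 < dc) :
    gaussianMat dc d {W | (60 * (1 + n / dc) * l ^ 2 * B) ^ 2 <
        ∑ α, (∑ i, featureMatrix σ X W i α ^ 2 -
          ∫ w, σ (w ⬝ᵥ X.col α) ^ 2 ∂gaussianVec d) ^ 2} ≤
      ENNReal.ofReal (Real.exp (-n)) := by
  have hl : 0 < l := zero_lt_one.trans_le hσ.one_le
  have : (0 : ℝ) < dc := Nat.cast_pos.2 hdc
  set m := fun α => ∫ w, σ (w ⬝ᵥ X.col α) ^ 2 ∂gaussianVec d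
  obtain ⟨N, hN, measure_le⟩ := exists_isCover_measure_pi_sum_ge_le (ι := Fin dc)
    (f := fun (v : EuclideanSpace ℝ (Fin n)) w =>
      (∑ α, v α * (σ (w ⬝ᵥ X.col α) ^ 2 - m α)) / (10 * B * l ^ 2))
    (fun v => (Finset.measurable_fun_sum _ fun α _ =>
      (((hσ.measurable_comp_dotProduct _).pow_const 2).sub_const _).const_mul _).div_const _)
    (fun v hv =>
      hσ.expMoment_sum_mul_sq_sub_integral_le hB hXB hX (sum_sq_le_one_of_norm_le_one hv))
  rw [finrank_euclideanSpace_fin, Fintype.card_fin] at measure_le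
  refine (measure_mono fun W hW => ?_).trans measure_le
  by_contra hgood
  simp only [Set.mem_ofPred_eq, not_exists, not_and, not_le] at hgood
  refine not_le.2 hW ((sum_sq_le_of_isCover hN _
    (K := 30 * (1 + n / dc) * l ^ 2 * B) (by positivity) fun v hv => ?_).trans_eq (by ring))
  have hWv := hgood v hv
  rw [← Finset.sum_div, div_lt_iff₀ (by positivity), Finset.sum_comm] at hWv
  calc ∑ α, v α * (∑ i, featureMatrix σ X W i α ^ 2 - m α)
      = (∑ α, ∑ i, v α * (σ (W i ⬝ᵥ X.col α) ^ 2 - m α)) / dc := by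
        rw [Finset.sum_div]
        refine Finset.sum_congr rfl fun α _ => ?_
        rw [sum_featureMatrix_sq, ← Finset.mul_sum, Finset.sum_sub_distrib, Finset.sum_const,
          Finset.card_univ, Fintype.card_fin, nsmul_eq_mul]
        field_simp
    _ ≤ (dc + 3 * n) * (10 * B * l ^ 2) / dc := by gcongr
    _ = (10 + 30 * (n / dc)) * (l ^ 2 * B) := by field_simp; ring
    _ ≤ (30 + 30 * (n / dc)) * (l ^ 2 * B) := by gcongr; norm_num
    _ = 30 * (1 + n / dc) * l ^ 2 * B := by ring

lemma sum_sq_integral_sq_comp_sub_one_le (hσ : IsNormalizedActivation σ l)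
    (hX : ∀ α, X.col α ⬝ᵥ X.col α ≤ 2) (hcol : ∑ α, (X.col α ⬝ᵥ X.col α - 1) ^ 2 ≤ B ^ 2) :
    ∑ α, (∫ w, σ (w ⬝ᵥ X.col α) ^ 2 ∂gaussianVec d - 1) ^ 2 ≤ (5 * l ^ 2) ^ 2 * B ^ 2 := by
  calc ∑ α, (∫ w, σ (w ⬝ᵥ X.col α) ^ 2 ∂gaussianVec d - 1) ^ 2
      ≤ ∑ α, (5 * l ^ 2) ^ 2 * (X.col α ⬝ᵥ X.col α - 1) ^ 2 := by
        refine Finset.sum_le_sum fun α _ => ?_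
        rw [← sq_abs, ← sq_abs (_ - 1 : ℝ), ← mul_pow]
        gcongr
        exact hσ.abs_integral_sq_comp_dotProduct_sub_one_le (hX α)
    _ ≤ (5 * l ^ 2) ^ 2 * B ^ 2 := by
        rw [← Finset.mul_sum]
        gcongr

lemma isOrthonormal_featureMatrix [Nonempty (Fin n)] {W : Fin dc → Fin d → ℝ}
    (hσ : IsNormalizedActivation σ l) (hX : IsOrthonormal ε B X) (hε : ε ≤ 1)
    (hgram : ∀ α β, |∑ i, featureMatrix σ X W i α * featureMatrix σ X W i β -
      ∫ w, σ (w ⬝ᵥ X.col α) * σ (w ⬝ᵥ X.col β) ∂gaussianVec d| ≤ 208 * l ^ 2 * ε)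
    (hop : opNorm (featureMatrix σ X W) ≤ 16 * (1 + n / dc) * (l * B))
    (hdiag : ∑ α, (∑ i, featureMatrix σ X W i α ^ 2 -
      ∫ w, σ (w ⬝ᵥ X.col α) ^ 2 ∂gaussianVec d) ^ 2 ≤ (60 * (1 + n / dc) * l ^ 2 * B) ^ 2) :
    IsOrthonormal (220 * l ^ 2 * ε) (220 * (1 + n / dc) * l ^ 2 * B) (featureMatrix σ X W) := by
  have hl := hσ.one_le
  have hε₀ := hX.eps_nonneg
  have hB := hX.bound_pos
  have hcol := hX.col_dotProduct_self_le_two hε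
  have sum_variance_le := hσ.sum_sq_integral_sq_comp_sub_one_le hcol
    hX.sum_sq_col_dotProduct_self_sub_one_le
  refine ⟨fun α => ?_, fun α β hαβ => ?_, hop.trans ?_, ?_⟩
  · have gram_le := hgram α α
    simp only [← pow_two] at gram_le
    have variance_le : |∫ w, σ (w ⬝ᵥ X.col α) ^ 2 ∂gaussianVec d - 1| ≤ 5 * l ^ 2 * ε := by
      refine (hσ.abs_integral_sq_comp_dotProduct_sub_one_le (hcol α)).trans ?_
      gcongr
      exact hX.abs_col_dotProduct_self_sub_one_le α
    have : 0 ≤ l ^ 2 * ε := by positivity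
    linarith [_root_.abs_sub_le (∑ i, featureMatrix σ X W i α ^ 2)
      (∫ w, σ (w ⬝ᵥ X.col α) ^ 2 ∂gaussianVec d) 1]
  · have covariance_le := hσ.abs_integral_mul_comp_dotProduct_le hε
      (hX.abs_col_dotProduct_self_sub_one_le α) (hX.abs_col_dotProduct_self_sub_one_le β)
      (hX.2.1 α β hαβ)
    linarith [abs_sub_abs_le_abs_sub (∑ i, featureMatrix σ X W i α * featureMatrix σ X W i β)
      (∫ w, σ (w ⬝ᵥ X.col α) * σ (w ⬝ᵥ X.col β) ∂gaussianVec d), hgram α β]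
  · rw [mul_assoc _ (l ^ 2)]
    gcongr
    · norm_num
    · exact le_self_pow₀ hl two_ne_zero
  · have one_le_ratio : (1 : ℝ) ≤ 1 + n / dc := le_add_of_nonneg_right (by positivity)
    calc ∑ α, (∑ i, featureMatrix σ X W i α ^ 2 - 1) ^ 2
        ≤ 2 * (60 * (1 + n / dc) * l ^ 2 * B) ^ 2 + 2 * ((5 * l ^ 2) ^ 2 * B ^ 2) :=
          (sum_sq_sub_le_two_mul_add_two_mul _ _ _).trans (by gcongr)
      _ ≤ 2 * (60 * (1 + n / dc) * l ^ 2 * B) ^ 2 + 2 * (5 * (1 + n / dc) * l ^ 2 * B) ^ 2 := by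
          rw [← mul_pow]
          gcongr
          linarith
      _ ≤ (220 * (1 + n / dc) * l ^ 2 * B) ^ 2 := by
          linarith [sq_nonneg ((1 + n / dc) * l ^ 2 * B)]

lemma measure_not_isOrthonormal_featureMatrix_le [Nonempty (Fin n)]
    (hσ : IsNormalizedActivation σ l) (hX : IsOrthonormal ε B X) (hε : ε ≤ 1) (hdc : 0 < dc) :
    gaussianMat dc d {W | IsOrthonormal (220 * l ^ 2 * ε) (220 * (1 + n / dc) * l ^ 2 * B)
        (featureMatrix σ X W)}ᶜ ≤
      ENNReal.ofReal (2 * n ^ 2 * Real.exp (-(dc * ε ^ 2)) + 2 * Real.exp (-n)) := by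
  have hcol := hX.col_dotProduct_self_le_two hε
  have union_bound := (measure_union_le _ _).trans (add_le_add
    (hσ.measure_exists_lt_abs_gram_sub_le hcol hX.eps_nonneg hε hdc)
    ((measure_union_le _ _).trans (add_le_add
      (hσ.measure_lt_opNorm_featureMatrix_le hX.bound_pos hX.2.2.1
        hX.sum_sq_col_dotProduct_self_sub_one_le hdc)
      (hσ.measure_lt_sum_sq_gram_diag_sub_le hX.bound_pos hX.2.2.1 hcol hdc))))
  rw [← ENNReal.ofReal_add (by positivity) (by positivity),
    ← ENNReal.ofReal_add (by positivity) (by positivity), ← two_mul] at union_bound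
  refine (measure_mono fun W hW => ?_).trans union_bound
  by_contra hgood
  simp only [Set.mem_union, Set.mem_ofPred_eq, not_or, not_exists, not_lt] at hgood
  exact hW (hσ.isOrthonormal_featureMatrix hX hε hgood.1 hgood.2.1 hgood.2.2)

end IsNormalizedActivation

end Propagation

theorem orthonormal_propagation_general {d n dc : ℕ} {X : Matrix (Fin d) (Fin n) ℝ} {ε B l : ℝ}
    {σ : ℝ → ℝ} (hσ : IsNormalizedActivation σ l) (hX : IsOrthonormal ε B X) (hε : ε ≤ 1) :
    ENNReal.ofReal (1 - 2 * n ^ 2 * Real.exp (-(dc * ε ^ 2)) - 3 * Real.exp (-n)) ≤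
      gaussianMat dc d {W | IsOrthonormal (220 * l ^ 2 * ε) (220 * (1 + n / dc) * l ^ 2 * B)
        (featureMatrix σ X W)} := by
  rcases n.eq_zero_or_pos with rfl | hn
  · rw [ENNReal.ofReal_of_nonpos (by norm_num)]
    exact zero_le
  have : Nonempty (Fin n) := ⟨⟨0, hn⟩⟩
  rcases dc.eq_zero_or_pos with rfl | hdc
  · have : (1 : ℝ) ≤ n ^ 2 := one_le_pow₀ (Nat.one_le_cast.2 hn)
    rw [ENNReal.ofReal_of_nonpos]
    · exact zero_le
    · norm_num
      linarith [Real.exp_pos (-n)]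
  · refine (ENNReal.ofReal_le_ofReal ?_).trans (ofReal_one_sub_le_measure_of_compl_le
      (by positivity) (hσ.measure_not_isOrthonormal_featureMatrix_le hX hε hdc))
    linarith [Real.exp_pos (-n)]

theorem orthonormal_propagation :
    ∃ C : ℝ, 0 < C ∧ ∃ c : ℝ, 0 < c ∧
      ∀ (d n dc : ℕ) (X : Matrix (Fin d) (Fin n) ℝ) (ε B lamσ : ℝ)
        (σ σ' σ'' : ℝ → ℝ),
        (∀ x, HasDerivAt σ (σ' x) x) →
        (∀ x, HasDerivAt σ' (σ'' x) x) →
        (∀ x, |σ' x| ≤ lamσ) →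
        (∀ x, |σ'' x| ≤ lamσ) →
        (∫ x, σ x ∂stdGaussian) = 0 →
        (∫ x, (σ x) ^ 2 ∂stdGaussian) = 1 →
        IsOrthonormal ε B X →
        ε < 1 / lamσ →
        gaussianMat dc d
            {W | IsOrthonormal (C * lamσ ^ 2 * ε) (C * (1 + (n : ℝ) / (dc : ℝ)) * lamσ ^ 2 * B)
              ((Real.sqrt dc)⁻¹ • ((Matrix.of W * X).map σ))} ≥
          ENNReal.ofReal
            (1 - 2 * (n : ℝ) ^ 2 * Real.exp (-c * dc * ε ^ 2) - 3 * Real.exp (-c * n)) := by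
  refine ⟨220, by norm_num, 1, one_pos,
    fun d n dc X ε B l σ σ' _ hσ' _ hσ'_le _ hmean hvar hX hε => ?_⟩
  have hσ : IsNormalizedActivation σ l :=
    ⟨fun x => (hσ' x).differentiableAt, fun x => (hσ' x).deriv ▸ hσ'_le x, hmean, hvar⟩
  have hε₁ : ε ≤ 1 := hε.le.trans (div_le_one_of_le₀ hσ.one_le (zero_le_one.trans hσ.one_le))
  simpa only [featureMatrix, neg_mul, one_mul] using orthonormal_propagation_general hσ hX hε₁
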